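/- arXiv:1301.6826 — 2 statements merged into one kernel-verified Lean document; each statement's English description precedes it below -/
import Mathlib

section
/- Let G be a finite group which is an SST-group or an NSST-group. Then G is an SC-group, i.e., every chief factor of G is a simple group. -/
open scoped Pointwise

section Defs

variable {G : Type*} [Group G]

/-- `K` is an SS-permutable supplement of `H` in `G`: `HK = G` and `H` permutes with
every Sylow subgroup of `K`. -/
def IsSSSupplement (H K : Subgroup G) : Prop :=
  (H : Set G) * (K : Set G) = Set.univ ∧
    ∀ (p : ℕ) [Fact p.Prime] (P : Sylow p K),
      (H : Set G) * ((P.toSubgroup.map K.subtype : Subgroup G) : Set G) =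
        ((P.toSubgroup.map K.subtype : Subgroup G) : Set G) * (H : Set G)

/-- `H` is SS-permutable in `G`: `H` has a supplement `K` such that `H` permutes with
every Sylow subgroup of `K`. -/
def IsSSPermutable (H : Subgroup G) : Prop :=
  ∃ K : Subgroup G, IsSSSupplement H K

/-- `H` is NSS-permutable in `G`: `H` has a normal supplement `K` such that `H` permutes
with every Sylow subgroup of `K`. -/
def IsNSSPermutable (H : Subgroup G) : Prop :=
  ∃ K : Subgroup G, K.Normal ∧ IsSSSupplement H K

/-- `H` is S-permutable in `G`: it permutes with every Sylow subgroup of `G`. -/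
def IsSPermutable (H : Subgroup G) : Prop :=
  ∀ (p : ℕ) [Fact p.Prime] (P : Sylow p G),
    (H : Set G) * ((P : Subgroup G) : Set G) = ((P : Subgroup G) : Set G) * (H : Set G)

/-- `H` is semipermutable in `G`: `HX = XH` for every subgroup `X` with `gcd(|H|,|X|) = 1`. -/
def IsSemipermutable (H : Subgroup G) : Prop :=
  ∀ X : Subgroup G, Nat.Coprime (Nat.card H) (Nat.card X) →
    (H : Set G) * (X : Set G) = (X : Set G) * (H : Set G)

/-- `H` is S-semipermutable in `G`: `HQ = QH` for every Sylow `q`-subgroup `Q` of `G`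
with `q` a prime not dividing `|H|`. -/
def IsSSemipermutable (H : Subgroup G) : Prop :=
  ∀ (q : ℕ) [Fact q.Prime], ¬ q ∣ Nat.card H → ∀ Q : Sylow q G,
    (H : Set G) * ((Q : Subgroup G) : Set G) = ((Q : Subgroup G) : Set G) * (H : Set G)

end Defs

/-- `G` is an SST-group: SS-permutability is a transitive relation. -/
def IsSSTGroup (G : Type*) [Group G] : Prop :=
  ∀ H K : Subgroup G, H ≤ K → IsSSPermutable (H.subgroupOf K) → IsSSPermutable K →
    IsSSPermutable H

/-- `G` is an NSST-group: NSS-permutability is a transitive relation. -/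
def IsNSSTGroup (G : Type*) [Group G] : Prop :=
  ∀ H K : Subgroup G, H ≤ K → IsNSSPermutable (H.subgroupOf K) → IsNSSPermutable K →
    IsNSSPermutable H

/-- `G` is a PST-group: S-permutability is a transitive relation. -/
def IsPSTGroup (G : Type*) [Group G] : Prop :=
  ∀ H K : Subgroup G, H ≤ K → IsSPermutable (H.subgroupOf K) → IsSPermutable K →
    IsSPermutable H

/-- `G` is a BT-group: semipermutability is a transitive relation. -/
def IsBTGroup (G : Type*) [Group G] : Prop :=
  ∀ H K : Subgroup G, H ≤ K → IsSemipermutable (H.subgroupOf K) → IsSemipermutable K →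
    IsSemipermutable H

theorem Subgroup.Normal.isSSSupplement_top {G : Type*} [Group G] {H : Subgroup G}
    (hH : H.Normal) : IsSSSupplement H ⊤ := by
  refine ⟨?_, fun p _ P => ?_⟩
  · rw [Set.eq_univ_iff_forall]
    exact fun x => ⟨1, H.one_mem, x, Subgroup.mem_top x, one_mul x⟩
  · rw [← Subgroup.normal_mul, ← Subgroup.mul_normal, sup_comm]

open Subgroup in
/-- A subnormal subgroup of defect at most two is SS-permutable in an SST-group and in an
NSST-group. -/
theorem isSSPermutable_of_le_normalizer {G : Type*} [Group G]
    (hG : IsSSTGroup G ∨ IsNSSTGroup G) {A M : Subgroup G} (hM : M.Normal) (hAM : A ≤ M)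
    (hA : M ≤ normalizer (A : Set G)) : IsSSPermutable A := by
  have hA' : (A.subgroupOf M).Normal := (normal_subgroupOf_iff_le_normalizer hAM).2 hA
  rcases hG with hG | hG
  · exact hG A M hAM ⟨⊤, hA'.isSSSupplement_top⟩ ⟨⊤, hM.isSSSupplement_top⟩
  · obtain ⟨K, -, hK⟩ := hG A M hAM ⟨⊤, inferInstance, hA'.isSSSupplement_top⟩
      ⟨⊤, inferInstance, hM.isSSSupplement_top⟩
    exact ⟨K, hK⟩

/-- SS-permutability is preserved by surjective homomorphisms. -/
theorem IsSSPermutable.map {G G' : Type*} [Group G] [Finite G] [Group G'] {f : G →* G'}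
    (hf : Function.Surjective f) {A : Subgroup G} (hA : IsSSPermutable A) :
    IsSSPermutable (A.map f) := by
  obtain ⟨K, hK, hP⟩ := hA
  refine ⟨K.map f, ?_, fun p _ P => ?_⟩
  · rw [Subgroup.coe_map, Subgroup.coe_map, ← Set.image_mul, hK, Set.image_univ_of_surjective hf]
  · obtain ⟨Q, rfl⟩ := Sylow.mapSurjective_surjective (f.subgroupMap_surjective K) p P
    have key : (Q.mapSurjective (f.subgroupMap_surjective K)).toSubgroup.map (K.map f).subtype =
        (Q.toSubgroup.map K.subtype).map f := by
      rw [Sylow.coe_mapSurjective, Subgroup.map_map, Subgroup.map_map]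
      rfl
    rw [key, Subgroup.coe_map f, Subgroup.coe_map f, ← Set.image_mul, ← Set.image_mul, hP p Q]

namespace Subgroup

variable {G : Type*} [Group G]

theorem eq_top_of_forall_prime_not_dvd_index {H : Subgroup G}
    (h : ∀ p : ℕ, p.Prime → ¬ p ∣ H.index) : H = ⊤ := by
  rw [← index_eq_one]
  by_contra hne
  obtain ⟨p, hp, hd⟩ := Nat.exists_prime_and_dvd hne
  exact h p hp hd

/-- A supplement `K` of a subgroup of `H` acts transitively on the cosets of `H`. -/
theorem relIndex_eq_index_of_mul_eq_univ {A H K : Subgroup G} (hAH : A ≤ H)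
    (hAK : (A : Set G) * (K : Set G) = Set.univ) : H.relIndex K = H.index := by
  have hcoset : ∀ x : G ⧸ H, ∃ k : K, k • ((1 : G) : G ⧸ H) = x := by
    intro x
    induction x using QuotientGroup.induction_on with
    | H g =>
      obtain ⟨a, ha, k, hk, hak⟩ := Set.eq_univ_iff_forall.1 hAK g⁻¹
      refine ⟨⟨k⁻¹, K.inv_mem hk⟩, ?_⟩
      change ((k⁻¹ * 1 : G) : G ⧸ H) = g
      rw [QuotientGroup.eq]
      have : g = k⁻¹ * a⁻¹ := by
        rw [← mul_inv_rev, show a * k = g⁻¹ from hak, inv_inv]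
      rw [this]
      simpa using hAH ha
  have : MulAction.IsPretransitive K (G ⧸ H) :=
    (MulAction.isPretransitive_iff_base ((1 : G) : G ⧸ H)).2 hcoset
  have hstab : MulAction.stabilizer K ((1 : G) : G ⧸ H) = H.subgroupOf K := by
    ext k
    rw [MulAction.mem_stabilizer_iff, mem_subgroupOf]
    change ((k * 1 : G) : G ⧸ H) = ((1 : G) : G ⧸ H) ↔ _
    rw [QuotientGroup.eq]
    simp
  rw [relIndex, ← hstab, MulAction.index_stabilizer_of_transitive]
  rfl

/-- If `K` supplements a subgroup of `H`, and `H` contains a Sylow `p`-subgroup of `K`, then `H`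
has index prime to `p`. -/
theorem not_dvd_index_of_sylow_le [Finite G] {A H K : Subgroup G} (hAH : A ≤ H)
    (hAK : (A : Set G) * (K : Set G) = Set.univ) {p : ℕ} [Fact p.Prime] (P : Sylow p K)
    (hP : P.toSubgroup.map K.subtype ≤ H) : ¬ p ∣ H.index := by
  rw [← relIndex_eq_index_of_mul_eq_univ hAH hAK]
  intro h
  exact P.not_dvd_index (h.trans (index_dvd_of_le (map_le_iff_le_comap.1 hP)))

section MinimalNormal

variable {A M : Subgroup G}

/-- `A` is minimal among the nontrivial subgroups of `M` normalized by `M`. -/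
structure IsMinimalNormalIn (A M : Subgroup G) : Prop where
  ne_bot : A ≠ ⊥
  le : A ≤ M
  le_normalizer : M ≤ normalizer (A : Set G)
  eq_of_le : ∀ B : Subgroup G, B ≠ ⊥ → B ≤ A → M ≤ normalizer (B : Set G) → B = A

theorem exists_isMinimalNormalIn [Finite G] (hM : M ≠ ⊥) :
    ∃ A : Subgroup G, IsMinimalNormalIn A M := by
  obtain ⟨A, ⟨h1, h2, h3⟩, hmin⟩ := Set.Finite.exists_minimal
    (s := {A : Subgroup G | A ≠ ⊥ ∧ A ≤ M ∧ M ≤ normalizer (A : Set G)})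
    (Set.toFinite _) ⟨M, hM, le_rfl, Subgroup.le_normalizer⟩
  exact ⟨A, h1, h2, h3, fun B hB hBA hMB =>
    le_antisymm hBA (hmin ⟨hB, hBA.trans h2, hMB⟩ hBA)⟩

namespace IsMinimalNormalIn

theorem map_conj_eq_or_disjoint [Finite G] (hM : M.Normal) (hA : IsMinimalNormalIn A M) (g : G) :
    A.map (MulAut.conj g).toMonoidHom = A ∨ A ⊓ A.map (MulAut.conj g).toMonoidHom = ⊥ := by
  by_cases h : A ⊓ A.map (MulAut.conj g).toMonoidHom = ⊥
  · exact Or.inr h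
  refine Or.inl (eq_of_le_of_card_ge (inf_eq_left.1 (hA.eq_of_le _ h inf_le_left ?_)) ?_).symm
  · rw [le_normalizer_iff]
    rintro m hm _ ⟨hxA, a, ha, rfl⟩
    refine ⟨le_normalizer_iff.1 hA.le_normalizer m hm _ hxA, g⁻¹ * m * g * a * (g⁻¹ * m * g)⁻¹,
      le_normalizer_iff.1 hA.le_normalizer _ ?_ a ha, ?_⟩
    · simpa using hM.conj_mem m hm g⁻¹
    · simp [mul_assoc]
  · exact (card_map_of_injective (MulAut.conj g).injective).le

theorem commute_conj (hM : M.Normal) (hA : IsMinimalNormalIn A M) {g : G}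
    (h : A ⊓ A.map (MulAut.conj g).toMonoidHom = ⊥) {a b : G} (ha : a ∈ A) (hb : b ∈ A) :
    Commute a (g * b * g⁻¹) := by
  have hconj : ∀ {m c : G}, m ∈ M → c ∈ A → m * c * m⁻¹ ∈ A := fun hm hc =>
    le_normalizer_iff.1 hA.le_normalizer _ hm _ hc
  have hgb : g * b * g⁻¹ ∈ M := hM.conj_mem b (hA.le hb) g
  have hmem : a * (g * b * g⁻¹) * a⁻¹ * (g * b * g⁻¹)⁻¹ ∈
      A ⊓ A.map (MulAut.conj g).toMonoidHom := by
    constructor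
    · simpa [mul_assoc] using A.mul_mem ha (hconj hgb (A.inv_mem ha))
    · have hga : g⁻¹ * a * g ∈ M := by simpa using hM.conj_mem a (hA.le ha) g⁻¹
      refine ⟨g⁻¹ * a * g * b * (g⁻¹ * a * g)⁻¹ * b⁻¹,
        A.mul_mem (hconj hga hb) (A.inv_mem hb), ?_⟩
      simp [mul_assoc]
  rw [h, mem_bot, mul_inv_eq_one, mul_inv_eq_iff_eq_mul] at hmem
  exact hmem

/-- An abelian minimal normal subgroup of a minimal normal subgroup `M` is central in `M`. -/
theorem le_centralizer_of_commute [Finite G] (hM : M.Normal)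
    (hmin : ∀ L : Subgroup G, L.Normal → L ≤ M → L = ⊥ ∨ L = M)
    (hA : IsMinimalNormalIn A M) (hcomm : ∀ a ∈ A, ∀ b ∈ A, Commute a b) :
    A ≤ centralizer (M : Set G) := by
  have hAcl : A ≤ normalClosure (A : Set G) := le_normalClosure
  have hcl : normalClosure (A : Set G) = M :=
    (hmin _ normalClosure_normal (normalClosure_le_normal hA.le)).resolve_left
      fun h => hA.ne_bot (le_bot_iff.1 (h ▸ hAcl))
  rw [le_centralizer_iff, ← hcl, normalClosure, closure_le]
  intro x hx a ha
  obtain ⟨b, hb, hbx⟩ := Group.mem_conjugatesOfSet_iff.1 hx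
  obtain ⟨g, rfl⟩ := isConj_iff.1 hbx
  rcases hA.map_conj_eq_or_disjoint hM g with h | h
  · have hgb : g * b * g⁻¹ ∈ A := h ▸ ⟨b, hb, rfl⟩
    exact hcomm a ha _ hgb
  · exact hA.commute_conj hM h ha hb

theorem commute_of_isPGroup [Finite G] (hA : IsMinimalNormalIn A M) {p : ℕ} [Fact p.Prime]
    (hp : IsPGroup p A) : ∀ a ∈ A, ∀ b ∈ A, Commute a b := by
  have : Nontrivial A := (nontrivial_iff_ne_bot A).2 hA.ne_bot
  have := hp.center_nontrivial
  obtain ⟨⟨z, hz⟩, hz1⟩ := exists_ne (1 : center A)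
  have hle : A ⊓ centralizer (A : Set G) = A := by
    refine hA.eq_of_le _ ?_ inf_le_left ?_
    · intro h
      have hzc : (z : G) ∈ A ⊓ centralizer (A : Set G) :=
        ⟨z.2, fun a ha => congrArg Subtype.val (mem_center_iff.1 hz ⟨a, ha⟩)⟩
      rw [h, mem_bot] at hzc
      exact hz1 (Subtype.ext (Subtype.ext hzc))
    · rw [le_normalizer_iff]
      intro m hm c hc
      have hconj := le_normalizer_iff.1 hA.le_normalizer
      refine ⟨hconj m hm c hc.1, fun a ha => ?_⟩
      have h := hc.2 (m⁻¹ * a * m) (by simpa using hconj m⁻¹ (M.inv_mem hm) a ha)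
      simpa [mul_assoc] using congrArg (fun x => m * x * m⁻¹) h
  intro a ha b hb
  exact ((inf_eq_left.1 hle) hb a ha)

/-- A nonabelian minimal normal subgroup of `M` is normalized by the `p`-subgroups that
permute with it. -/
theorem le_normalizer_of_permute [Finite G] (hM : M.Normal) (hA : IsMinimalNormalIn A M)
    (hcomm : ¬ ∀ a ∈ A, ∀ b ∈ A, Commute a b) {p : ℕ} [Fact p.Prime] {P : Subgroup G}
    (hP : IsPGroup p P) (hAP : (A : Set G) * (P : Set G) = (P : Set G) * (A : Set G)) :
    P ≤ normalizer (A : Set G) := by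
  intro x hx
  refine mem_normalizer_iff_map_conj_eq.2
    ((hA.map_conj_eq_or_disjoint hM x).resolve_right fun h => hcomm ?_)
  refine hA.commute_of_isPGroup (p := p) ?_
  rintro ⟨a, ha⟩
  obtain ⟨b, hb, y, hy, hby⟩ : x * a ∈ (A : Set G) * (P : Set G) := hAP ▸ Set.mul_mem_mul hx ha
  have hby : b * y = x * a := hby
  obtain ⟨n, hn⟩ := hP ⟨y * x⁻¹, P.mul_mem hy (P.inv_mem hx)⟩
  have hn : (y * x⁻¹) ^ p ^ n = 1 := congrArg Subtype.val hn
  refine ⟨n, Subtype.ext ?_⟩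
  have hy' : y * x⁻¹ = b⁻¹ * (x * a * x⁻¹) := by
    rw [← hby]; group
  rw [hy', (hA.commute_conj hM h (A.inv_mem hb) ha).mul_pow, inv_pow, inv_mul_eq_one] at hn
  have hmem : (x * a * x⁻¹) ^ p ^ n ∈ A ⊓ A.map (MulAut.conj x).toMonoidHom :=
    ⟨hn ▸ A.pow_mem hb _, (A.map (MulAut.conj x).toMonoidHom).pow_mem ⟨a, ha, rfl⟩ _⟩
  rw [h, mem_bot, conj_pow, conj_eq_one_iff] at hmem
  exact hmem

end IsMinimalNormalIn

end MinimalNormal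

end Subgroup

open Subgroup

/-- If an SS-permutable subgroup `A` is normalized by a Sylow `p`-subgroup of the group or by
every `p`-subgroup permuting with it, for each prime `p`, then it is normal. -/
theorem IsSSPermutable.normal {G : Type*} [Group G] [Finite G] {A : Subgroup G}
    (hA : IsSSPermutable A)
    (h : ∀ (p : ℕ) [Fact p.Prime], (∃ S : Sylow p G, S.toSubgroup ≤ normalizer (A : Set G)) ∨
      ∀ P : Subgroup G, IsPGroup p P → (A : Set G) * (P : Set G) = (P : Set G) * (A : Set G) →
        P ≤ normalizer (A : Set G)) : A.Normal := by
  obtain ⟨K, hAK, hK⟩ := hA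
  refine normalizer_eq_top_iff.1 (eq_top_of_forall_prime_not_dvd_index fun p hp => ?_)
  have : Fact p.Prime := ⟨hp⟩
  rcases h p with ⟨S, hS⟩ | h
  · exact fun hd => S.not_dvd_index (hd.trans (index_dvd_of_le hS))
  · obtain ⟨P⟩ : Nonempty (Sylow p K) := inferInstance
    exact not_dvd_index_of_sylow_le le_normalizer hAK P (h _ (P.isPGroup'.map _) (hK p P))

section MinimalNormal

variable {G : Type*} [Group G] [Finite G] {M : Subgroup G}

/-- A minimal normal subgroup with trivial centre is simple if all its normal subgroups are
SS-permutable. -/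
theorem isSimpleGroup_of_inf_centralizer_eq_bot
    (hperm : ∀ A ≤ M, M ≤ normalizer (A : Set G) → IsSSPermutable A) (hM : M.Normal)
    (hne : M ≠ ⊥) (hmin : ∀ L : Subgroup G, L.Normal → L ≤ M → L = ⊥ ∨ L = M)
    (hcent : M ⊓ centralizer (M : Set G) = ⊥) : IsSimpleGroup M := by
  obtain ⟨A, hA⟩ := exists_isMinimalNormalIn hne
  have hcomm : ¬ ∀ a ∈ A, ∀ b ∈ A, Commute a b := fun h => hA.ne_bot (le_bot_iff.1
    (hcent ▸ le_inf hA.le (hA.le_centralizer_of_commute hM hmin h)))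
  have hAn : A.Normal := (hperm A hA.le hA.le_normalizer).normal fun p _ =>
    Or.inr fun P hP hAP => hA.le_normalizer_of_permute hM hcomm hP hAP
  obtain rfl : A = M := (hmin A hAn hA.le).resolve_left hA.ne_bot
  refine Subgroup.isSimpleGroup_iff.2 ⟨hne, fun B hB hBn => or_iff_not_imp_left.2 fun hB0 => ?_⟩
  exact hA.eq_of_le B hB0 hB ((normal_subgroupOf_iff_le_normalizer hB).1 hBn)

/-- An abelian minimal normal subgroup has prime exponent. -/
theorem exists_prime_forall_pow_eq_one (hM : M.Normal) (hne : M ≠ ⊥)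
    (hmin : ∀ L : Subgroup G, L.Normal → L ≤ M → L = ⊥ ∨ L = M)
    (hcomm : ∀ a ∈ M, ∀ b ∈ M, Commute a b) :
    ∃ p : ℕ, p.Prime ∧ ∀ x ∈ M, x ^ p = 1 := by
  obtain ⟨p, hp, hd⟩ := Nat.exists_prime_and_dvd
    (mt (card_eq_one (H := M)).1 hne)
  have : Fact p.Prime := ⟨hp⟩
  obtain ⟨⟨z, hz⟩, hzp⟩ := exists_prime_orderOf_dvd_card' (G := M) p hd
  rw [Subgroup.orderOf_mk] at hzp
  let L : Subgroup G :=
    { carrier := {x | x ∈ M ∧ x ^ p = 1}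
      one_mem' := ⟨M.one_mem, one_pow p⟩
      mul_mem' := fun {a b} ha hb =>
        ⟨M.mul_mem ha.1 hb.1, by rw [(hcomm a ha.1 b hb.1).mul_pow, ha.2, hb.2, one_mul]⟩
      inv_mem' := fun {a} ha => ⟨M.inv_mem ha.1, by rw [inv_pow, ha.2, inv_one]⟩ }
  have hL : L.Normal := ⟨fun x hx g =>
    ⟨hM.conj_mem x hx.1 g, by rw [conj_pow, hx.2, mul_one, mul_inv_cancel]⟩⟩
  have hzL : z ∈ L := ⟨hz, hzp ▸ pow_orderOf_eq_one z⟩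
  refine ⟨p, hp, fun x hx => ?_⟩
  rcases hmin L hL (fun x hx => hx.1) with h | h
  · rw [h, mem_bot] at hzL
    rw [hzL, orderOf_one] at hzp
    exact absurd hzp.symm hp.ne_one
  · exact (h.symm ▸ hx : x ∈ L).2

/-- An abelian minimal normal subgroup is simple if all its subgroups are SS-permutable. -/
theorem isSimpleGroup_of_commute
    (hperm : ∀ A ≤ M, M ≤ normalizer (A : Set G) → IsSSPermutable A) (hM : M.Normal)
    (hne : M ≠ ⊥) (hmin : ∀ L : Subgroup G, L.Normal → L ≤ M → L = ⊥ ∨ L = M)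
    (hcomm : ∀ a ∈ M, ∀ b ∈ M, Commute a b) : IsSimpleGroup M := by
  obtain ⟨p, hp, hexp⟩ := exists_prime_forall_pow_eq_one hM hne hmin hcomm
  have : Fact p.Prime := ⟨hp⟩
  have hMp : IsPGroup p M := fun x => ⟨1, Subtype.ext (by simpa using hexp x x.2)⟩
  obtain ⟨S⟩ : Nonempty (Sylow p G) := inferInstance
  obtain ⟨z, hzM, hz1, hzS⟩ : ∃ z ∈ M, z ≠ 1 ∧ ∀ s ∈ S, s * z * s⁻¹ = z := by
    let _ : MulAction S M := MulAction.compHom M ((MulAut.conjNormal (H := M)).comp S.toSubgroup.subtype)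
    have hdvd : p ∣ Nat.card M := by
      have : Nontrivial M := (nontrivial_iff_ne_bot M).2 hne
      obtain ⟨n, hn0, hn⟩ := hMp.nontrivial_iff_card.1 inferInstance
      exact hn ▸ dvd_pow_self p hn0.ne'
    obtain ⟨z, hz, hz1⟩ := S.isPGroup'.exists_fixed_point_of_prime_dvd_card_of_fixed_point M hdvd
      (a := 1) fun s => map_one (MulAut.conjNormal (H := M) (s : G))
    refine ⟨z, z.2, fun h => hz1 (Subtype.ext h.symm), fun s hs => ?_⟩
    exact congrArg Subtype.val (hz ⟨s, hs⟩)
  have hzle : zpowers z ≤ M := zpowers_le.2 hzM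
  have hMz : M ≤ normalizer (zpowers z : Set G) := by
    rw [le_normalizer_iff]
    intro m hm a ha
    rwa [hcomm m hm a (hzle ha), mul_inv_cancel_right]
  have hzn : (zpowers z).Normal := by
    refine (hperm _ hzle hMz).normal fun q _ => ?_
    by_cases hqp : q = p
    · subst hqp
      refine Or.inl ⟨S, ?_⟩
      rw [le_normalizer_iff]
      rintro s hs _ ⟨n, rfl⟩
      refine ⟨n, ?_⟩
      change z ^ n = s * z ^ n * s⁻¹
      rw [← conj_zpow, hzS s hs]
    · refine Or.inr fun Q hQ hzQ => ?_
      rw [le_normalizer_iff]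
      intro x hx a ha
      obtain ⟨b, hb, y, hy, hby⟩ : x * a ∈ (zpowers z : Set G) * (Q : Set G) :=
        hzQ ▸ Set.mul_mem_mul hx ha
      have hby : b * y = x * a := hby
      have hy' : y * x⁻¹ = b⁻¹ * (x * a * x⁻¹) := by
        rw [← hby]; group
      have hyM : y * x⁻¹ ∈ M :=
        hy' ▸ M.mul_mem (M.inv_mem (hzle hb)) (hM.conj_mem a (hzle ha) x)
      have hone : y * x⁻¹ = 1 := disjoint_def.1 (IsPGroup.disjoint_of_ne q p hqp _ _ hQ hMp)
        (Q.mul_mem hy (Q.inv_mem hx)) hyM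
      rw [hone] at hy'
      rwa [← inv_mul_eq_one.1 hy'.symm]
  have hzM' : zpowers z = M :=
    (hmin _ hzn hzle).resolve_left fun h => hz1 (zpowers_eq_bot.1 h)
  refine isSimpleGroup_of_prime_card (p := p) ?_
  rw [← hzM', Nat.card_zpowers, orderOf_eq_prime (hexp z hzM) hz1]

/-- A minimal normal subgroup is simple if all its normal subgroups are SS-permutable. -/
theorem isSimpleGroup_of_minimal_normal
    (hperm : ∀ A ≤ M, M ≤ normalizer (A : Set G) → IsSSPermutable A) (hM : M.Normal)
    (hne : M ≠ ⊥) (hmin : ∀ L : Subgroup G, L.Normal → L ≤ M → L = ⊥ ∨ L = M) :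
    IsSimpleGroup M := by
  rcases hmin (M ⊓ centralizer (M : Set G)) inferInstance inf_le_left with h | h
  · exact isSimpleGroup_of_inf_centralizer_eq_bot hperm hM hne hmin h
  · exact isSimpleGroup_of_commute hperm hM hne hmin fun a ha b hb => inf_eq_left.1 h hb a ha

end MinimalNormal

/-- Theorem A: every finite SST-group (resp. NSST-group) is an SC-group, i.e. every
chief factor `M/N` of `G` is a simple group. -/
theorem sst_or_nsst_group_is_SC_group {G : Type*} [Group G] [Finite G]
    (hG : IsSSTGroup G ∨ IsNSSTGroup G) :
    ∀ (N M : Subgroup G) [N.Normal] [M.Normal], N < M →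
      (∀ L : Subgroup G, L.Normal → N ≤ L → L ≤ M → L = N ∨ L = M) →
      IsSimpleGroup (M ⧸ N.subgroupOf M) := by
  intro N M _ hM hNM hmin
  let f := QuotientGroup.mk' N
  have hf : Function.Surjective f := QuotientGroup.mk'_surjective N
  have hker : f.ker = N := QuotientGroup.ker_mk' N
  have hsimple : IsSimpleGroup (M.map f) := by
    refine isSimpleGroup_of_minimal_normal (fun A hA hMA => ?_) (hM.map f hf) (fun h => ?_)
      fun L hL hLM => ?_
    · rw [← map_comap_eq_self_of_surjective hf A]
      refine (isSSPermutable_of_le_normalizer hG hM ?_ ?_).map hf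
      · refine (comap_mono hA).trans ?_
        rw [comap_map_eq, hker, sup_of_le_left hNM.le]
      · exact (map_le_iff_le_comap.1 hMA).trans (le_normalizer_comap f)
    · rw [Subgroup.map_eq_bot_iff, hker] at h
      exact hNM.not_ge h
    · have hcomap : L.comap f = N ∨ L.comap f = M := by
        refine hmin _ (hL.comap f) (hker.symm.le.trans (ker_le_comap f L)) ((comap_mono hLM).trans ?_)
        rw [comap_map_eq, hker, sup_of_le_left hNM.le]
      rw [← map_comap_eq_self_of_surjective hf L]
      refine hcomap.imp (fun h => ?_) fun h => by rw [h]
      rw [h, Subgroup.map_eq_bot_iff, hker]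
  have hkerM : N.subgroupOf M = (f.subgroupMap M).ker := by
    ext x
    rw [mem_subgroupOf, MonoidHom.mem_ker, Subtype.ext_iff]
    exact (QuotientGroup.eq_one_iff (x : G)).symm
  exact ((QuotientGroup.quotientMulEquivOfEq hkerM).trans
    (QuotientGroup.quotientKerEquivOfSurjective _ (f.subgroupMap_surjective M))).isSimpleGroup
end

section
/- For a finite solvable group G the following statements are equivalent: (1) G is an SST-group; (2) G is an NSST-group; (3) every subgroup of G is SS-permutable in G; (4) every subgroup of G is NSS-permutable in G; (5) every subgroup of G of prime power order is SS-permutable in G; (6) every subgroup of G of prime power order is NSS-permutable in G; (7) every cyclic subgroup of G of prime power order is SS-permutable in G; (8) every cyclic subgroup of G of prime power order is NSS-permutable in G. -/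
open scoped Pointwise

section Permuting

variable {G : Type*} [Group G]

/-- The normalised form of the permutability condition: one inclusion is enough. -/
theorem Subgroup.mul_comm_of_mul_subset {A B : Subgroup G}
    (h : ∀ a ∈ A, ∀ b ∈ B, a * b ∈ (B : Set G) * (A : Set G)) :
    (A : Set G) * (B : Set G) = (B : Set G) * (A : Set G) := by
  have key : (A : Set G) * (B : Set G) ⊆ (B : Set G) * (A : Set G) := by
    rintro _ ⟨a, ha, b, hb, rfl⟩
    exact h a ha b hb
  refine key.antisymm ?_
  rintro _ ⟨b, hb, a, ha, rfl⟩
  obtain ⟨b', hb', a', ha', e⟩ := h a⁻¹ (A.inv_mem ha) b⁻¹ (B.inv_mem hb)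
  refine ⟨a'⁻¹, A.inv_mem ha', b'⁻¹, B.inv_mem hb', ?_⟩
  have := congrArg (·⁻¹) e
  simpa using this

theorem Subgroup.coe_sup_of_mul_comm {A B : Subgroup G}
    (h : (A : Set G) * (B : Set G) = (B : Set G) * (A : Set G)) :
    ((A ⊔ B : Subgroup G) : Set G) = (A : Set G) * (B : Set G) := by
  let W : Subgroup G :=
    { carrier := (A : Set G) * (B : Set G)
      one_mem' := ⟨1, A.one_mem, 1, B.one_mem, by simp⟩
      mul_mem' := by
        intro x y hx hy
        have : x * y ∈ ((A : Set G) * (B : Set G)) * ((A : Set G) * (B : Set G)) :=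
          Set.mul_mem_mul hx hy
        rwa [mul_assoc, ← mul_assoc (B : Set G), ← h, mul_assoc (A : Set G) (B : Set G),
          coe_mul_coe, ← mul_assoc, coe_mul_coe] at this
      inv_mem' := by
        rintro _ ⟨a, ha, b, hb, rfl⟩
        rw [h]
        exact ⟨b⁻¹, B.inv_mem hb, a⁻¹, A.inv_mem ha, by simp⟩ }
  have hW : A ⊔ B ≤ W := sup_le (fun a ha => ⟨a, ha, 1, B.one_mem, by simp⟩)
    (fun b hb => ⟨1, A.one_mem, b, hb, by simp⟩)
  refine Set.Subset.antisymm hW ?_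
  rintro _ ⟨a, ha, b, hb, rfl⟩
  exact (A ⊔ B).mul_mem (le_sup_left (a := A) ha) (le_sup_right (a := A) hb)

theorem Subgroup.conj_smul_mul_comm {A B : Subgroup G}
    (h : (A : Set G) * (B : Set G) = (B : Set G) * (A : Set G)) {a : G} (ha : a ∈ A) :
    (A : Set G) * ((MulAut.conj a • B : Subgroup G) : Set G) =
      ((MulAut.conj a • B : Subgroup G) : Set G) * (A : Set G) := by
  have hA : ((MulAut.conj a • A : Subgroup G) : Set G) = A := by
    rw [Subgroup.conj_smul_eq_self_of_mem ha]
  have := congrArg (fun s : Set G => MulAut.conj a • s) h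
  simp only [smul_mul'] at this
  rwa [← Subgroup.coe_pointwise_smul, hA, ← Subgroup.coe_pointwise_smul] at this

theorem IsPGroup.exists_index_eq_pow_of_mul_eq_univ [Finite G] {p : ℕ} [Fact p.Prime]
    {A B : Subgroup G} (hA : IsPGroup p A) (h : (A : Set G) * (B : Set G) = Set.univ) :
    ∃ n, B.index = p ^ n := by
  obtain ⟨n, hn⟩ := hA.card_orbit (α := G ⧸ B) ((1 : G) : G ⧸ B)
  refine ⟨n, ?_⟩
  have : MulAction.orbit A ((1 : G) : G ⧸ B) = Set.univ := by
    refine Set.eq_univ_of_forall fun x => ?_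
    induction x using QuotientGroup.induction_on with
    | H g =>
      obtain ⟨a, ha, b, hb, rfl⟩ : g ∈ (A : Set G) * (B : Set G) := h ▸ Set.mem_univ g
      refine ⟨⟨a, ha⟩, ?_⟩
      change ((a * 1 : G) : G ⧸ B) = _
      rw [QuotientGroup.eq]
      simpa using hb
  rw [← hn, this, Nat.card_congr (Equiv.Set.univ _), Subgroup.index]

theorem IsPGroup.sup_of_mul_comm [Finite G] {p : ℕ} [Fact p.Prime] {A B : Subgroup G}
    (hA : IsPGroup p A) (hB : IsPGroup p B)
    (h : (A : Set G) * (B : Set G) = (B : Set G) * (A : Set G)) :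
    IsPGroup p (A ⊔ B : Subgroup G) := by
  set W := A ⊔ B with hW
  have hAW : A ≤ W := le_sup_left
  have hBW : B ≤ W := le_sup_right
  have hprod : (A.subgroupOf W : Set W) * (B.subgroupOf W : Set W) = Set.univ := by
    refine Set.eq_univ_of_forall fun w => ?_
    have hw : (w : G) ∈ (A : Set G) * (B : Set G) := by
      rw [← Subgroup.coe_sup_of_mul_comm h]
      exact w.2
    obtain ⟨a, ha, b, hb, e⟩ := hw
    exact ⟨⟨a, hAW ha⟩, ha, ⟨b, hBW hb⟩, hb, Subtype.ext e⟩
  obtain ⟨n, hn⟩ := IsPGroup.exists_index_eq_pow_of_mul_eq_univ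
    (hA.of_equiv (Subgroup.subgroupOfEquivOfLe hAW).symm) hprod
  obtain ⟨m, hm⟩ := IsPGroup.iff_card.1 (hB.of_equiv (Subgroup.subgroupOfEquivOfLe hBW).symm)
  refine IsPGroup.of_card (n := m + n) ?_
  rw [← (B.subgroupOf W).card_mul_index, hn, hm, pow_add]

end Permuting

section MaximalSubgroups

variable {G : Type*} [Group G]

/-- A maximal subgroup of a finite solvable group is NSS-permutable: the last term of the derived
series not contained in it is a suitable normal supplement. -/
theorem IsCoatom.isNSSPermutable [Finite G] [Group.IsSolvable G] {M : Subgroup G}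
    (hM : IsCoatom M) : IsNSSPermutable M := by
  obtain ⟨n, hn⟩ : ∃ n, ¬ derivedSeries G n ≤ M ∧ derivedSeries G (n + 1) ≤ M := by
    by_contra! hcon
    obtain ⟨k, hk⟩ := Group.IsSolvable.solvable (G := G)
    have : ∀ n, ¬ derivedSeries G n ≤ M := by
      intro n
      induction n with
      | zero => exact fun h => hM.1 (top_le_iff.1 h)
      | succ n ih => exact hcon n ih
    exact this k (hk ▸ bot_le)
  set A := derivedSeries G n with hA
  have hAn : A.Normal := inferInstance
  refine ⟨A, hAn, ?_, ?_⟩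
  · rw [← Subgroup.mul_normal, hM.2 _ (left_lt_sup.2 hn.1), Subgroup.coe_top]
  · intro q _ Q
    refine Subgroup.mul_comm_of_mul_subset ?_
    rintro m hm _ ⟨x, hx, rfl⟩
    obtain ⟨a, ha⟩ := MulAction.exists_smul_eq A Q (MulAut.conjNormal (H := A) m • Q)
    have hx' : MulAut.conjNormal (H := A) m x ∈ (a • Q : Sylow q A) := by
      rw [ha]
      exact ⟨x, hx, rfl⟩
    obtain ⟨y, hy, e⟩ := hx'
    have e' : (a : G) * y * (a : G)⁻¹ = m * x * m⁻¹ := by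
      have := congrArg (Subtype.val) e
      simpa using this
    have hc : (y : G)⁻¹ * a * y * (a : G)⁻¹ ∈ M := by
      apply hn.2
      rw [derivedSeries_succ]
      have := Subgroup.commutator_mem_commutator (A.inv_mem y.2) a.2
      simpa [commutatorElement_def] using this
    refine ⟨y, ⟨y, hy, rfl⟩, _, M.mul_mem hc hm, ?_⟩
    have : m * (x : G) = (m * x * m⁻¹) * m := by group
    simp only [Subgroup.subtype_apply]
    rw [this, ← e']
    group

theorem IsNSSPermutable.isSSPermutable {H : Subgroup G} (h : IsNSSPermutable H) :
    IsSSPermutable H :=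
  let ⟨K, _, hK⟩ := h
  ⟨K, hK⟩

theorem isNSSPermutable_top : IsNSSPermutable (⊤ : Subgroup G) :=
  ⟨⊤, inferInstance, by simp, fun p _ P => by simp⟩

theorem CovBy.isCoatom_subgroupOf {H K : Subgroup G} (h : H ⋖ K) : IsCoatom (H.subgroupOf K) := by
  refine ⟨fun e => h.1.not_ge (Subgroup.subgroupOf_eq_top.1 e), fun L hL => ?_⟩
  have hmap : (H.subgroupOf K).map K.subtype = H := by simp [h.1.le]
  have hlt : H < L.map K.subtype := by
    rw [← hmap]
    exact (Subgroup.map_lt_map_iff_of_injective K.subtype_injective).2 hL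
  have hle : L.map K.subtype ≤ K := Subgroup.map_subtype_le L
  have heq : L.map K.subtype = K := hle.eq_of_not_lt fun h' => h.2 hlt h'
  refine Subgroup.map_injective K.subtype_injective ?_
  rw [heq, ← MonoidHom.range_eq_map, Subgroup.range_subtype]

/-- A property of subgroups that holds for the whole group and passes from a subgroup to its
maximal subgroups holds for all subgroups. -/
theorem Subgroup.forall_of_covBy [Finite G] {C : Subgroup G → Prop} (top : C ⊤)
    (step : ∀ H K : Subgroup G, H ⋖ K → C K → C H) (H : Subgroup G) : C H := by
  induction H using WellFoundedGT.induction with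
  | ind H ih =>
    rcases eq_or_ne H ⊤ with rfl | hne
    · exact top
    · obtain ⟨K, hK, -⟩ := exists_covBy_le_of_lt (lt_top_iff_ne_top.2 hne)
      exact step H K hK (ih K hK.1)

theorem IsSSTGroup.isSSPermutable [Finite G] [Group.IsSolvable G] (h : IsSSTGroup G)
    (H : Subgroup G) : IsSSPermutable H :=
  Subgroup.forall_of_covBy isNSSPermutable_top.isSSPermutable
    (fun A B hAB hB => h A B hAB.1.le hAB.isCoatom_subgroupOf.isNSSPermutable.isSSPermutable hB) H

theorem IsNSSTGroup.isNSSPermutable [Finite G] [Group.IsSolvable G] (h : IsNSSTGroup G)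
    (H : Subgroup G) : IsNSSPermutable H :=
  Subgroup.forall_of_covBy isNSSPermutable_top
    (fun A B hAB hB => h A B hAB.1.le hAB.isCoatom_subgroupOf.isNSSPermutable hB) H

end MaximalSubgroups

section PrimaryElements

variable {G : Type*} [Group G]

theorem IsPGroup.zpowers {p k : ℕ} {x : G} (hx : x ^ p ^ k = 1) :
    IsPGroup p (Subgroup.zpowers x) :=
  IsPGroup.of_card_dvd_pow (n := k) (by rw [Nat.card_zpowers]; exact orderOf_dvd_of_pow_eq_one hx)

theorem IsSSSupplement.exists_conj_smul_eq {H K : Subgroup G} (h : IsSSSupplement H K) {p : ℕ}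
    [Fact p.Prime] (P : Sylow p K) (g : G) :
    ∃ a ∈ H, ∃ P' : Sylow p K, MulAut.conj g • P.toSubgroup.map K.subtype =
      MulAut.conj a • P'.toSubgroup.map K.subtype := by
  obtain ⟨a, ha, k, hk, rfl⟩ : g ∈ (H : Set G) * (K : Set G) := h.1 ▸ Set.mem_univ g
  refine ⟨a, ha, (⟨k, hk⟩ : K) • P, ?_⟩
  rw [map_mul, mul_smul]
  congr 1
  ext y
  constructor
  · rintro ⟨_, ⟨z, hz, rfl⟩, rfl⟩
    exact ⟨⟨k, hk⟩ * z * ⟨k, hk⟩⁻¹, ⟨z, hz, rfl⟩, rfl⟩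
  · rintro ⟨_, ⟨z, hz, rfl⟩, rfl⟩
    exact ⟨_, ⟨z, hz, rfl⟩, rfl⟩

/-- Every cyclic subgroup of prime power order permutes with the Sylow subgroups for the other
primes, and has a partner all of whose conjugates complete it to a Sylow subgroup. -/
def PrimaryPermuting (G : Type*) [Group G] : Prop :=
  ∀ (p : ℕ) [Fact p.Prime] (x : G), (∃ k, x ^ p ^ k = 1) →
    (∀ (q : ℕ) [Fact q.Prime], q ≠ p → ∀ Q : Sylow q G,
      (Subgroup.zpowers x : Set G) * (Q : Set G) = (Q : Set G) * (Subgroup.zpowers x : Set G)) ∧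
    ∃ S : Subgroup G, ∀ g : G, ∃ P : Sylow p G,
      (P : Set G) = (Subgroup.zpowers x : Set G) * ((MulAut.conj g • S : Subgroup G) : Set G)

/-- If `H` is a `p`-subgroup with SS-supplement `K` and `q ≠ p`, then `H` permutes with every Sylow
`q`-subgroup of the whole group. -/
theorem IsSSSupplement.mul_comm_sylow [Finite G] {H K : Subgroup G} (h : IsSSSupplement H K)
    {p q : ℕ} [Fact p.Prime] [Fact q.Prime] (hH : IsPGroup p H) (hqp : q ≠ p) (Q : Sylow q G) :
    (H : Set G) * (Q : Set G) = (Q : Set G) * (H : Set G) := by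
  obtain ⟨n, hn⟩ := hH.exists_index_eq_pow_of_mul_eq_univ h.1
  obtain ⟨Q₀⟩ : Nonempty (Sylow q K) := inferInstance
  have hidx : ¬ q ∣ (Q₀.toSubgroup.map K.subtype).index := by
    rw [Subgroup.index_map_subtype, hn, (Fact.out : q.Prime).dvd_mul, not_or]
    refine ⟨Q₀.not_dvd_index, fun hd => hqp ?_⟩
    exact (Nat.prime_dvd_prime_iff_eq Fact.out Fact.out).1
      ((Fact.out : q.Prime).dvd_of_dvd_pow hd)
  obtain ⟨g, hg⟩ := MulAction.exists_smul_eq G ((Q₀.2.map K.subtype).toSylow hidx) Q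
  obtain ⟨a, ha, Q₁, e⟩ := h.exists_conj_smul_eq Q₀ g
  have hQ : (Q : Subgroup G) = MulAut.conj a • Q₁.toSubgroup.map K.subtype := by
    rw [← e, ← hg]
    rfl
  have := Subgroup.conj_smul_mul_comm (h.2 q Q₁) ha
  rw [← hQ] at this
  exact this

/-- A `p`-subgroup `H` with SS-supplement `K` completes each Sylow `p`-subgroup of `K` to a Sylow
`p`-subgroup of the whole group. -/
theorem IsSSSupplement.exists_sylow_eq_mul [Finite G] {H K : Subgroup G} (h : IsSSSupplement H K)
    {p : ℕ} [Fact p.Prime] (hH : IsPGroup p H) (P : Sylow p K) :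
    ∃ P' : Sylow p G,
      (P' : Set G) = (H : Set G) * ((P.toSubgroup.map K.subtype : Subgroup G) : Set G) := by
  have hcomm := h.2 p P
  obtain ⟨P', hP'⟩ := (hH.sup_of_mul_comm (P.2.map K.subtype) hcomm).exists_le_sylow
  have hHP : H ≤ P' := le_sup_left.trans hP'
  have hSP : P.toSubgroup.map K.subtype ≤ P' := le_sup_right.trans hP'
  have hPK : (P' : Subgroup G).subgroupOf K = P :=
    P.3 P'.2.comap_subtype (Subgroup.map_le_iff_le_comap.1 hSP)
  refine ⟨P', Set.Subset.antisymm ?_ ?_⟩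
  · intro y hy
    obtain ⟨a, ha, k, hk, rfl⟩ : y ∈ (H : Set G) * (K : Set G) := h.1 ▸ Set.mem_univ y
    refine ⟨a, ha, k, ⟨⟨k, hk⟩, ?_, rfl⟩, rfl⟩
    rw [← hPK]
    change k ∈ (P' : Subgroup G)
    have := (P' : Subgroup G).mul_mem ((P' : Subgroup G).inv_mem (hHP ha)) hy
    simpa using this
  · rintro _ ⟨a, ha, b, hb, rfl⟩
    exact (P' : Subgroup G).mul_mem (hHP ha) (hSP hb)

theorem primaryPermuting_of_isSSPermutable [Finite G]
    (h : ∀ H : Subgroup G, IsCyclic H → (∃ p k : ℕ, p.Prime ∧ Nat.card H = p ^ k) →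
      IsSSPermutable H) :
    PrimaryPermuting G := by
  rintro p _ x ⟨k, hx⟩
  have hp := IsPGroup.zpowers hx
  obtain ⟨n, hn⟩ := IsPGroup.iff_card.1 hp
  obtain ⟨K, hK⟩ := h (Subgroup.zpowers x) inferInstance ⟨p, n, Fact.out, hn⟩
  refine ⟨fun q _ hq Q => hK.mul_comm_sylow hp hq Q, ?_⟩
  obtain ⟨P⟩ : Nonempty (Sylow p K) := inferInstance
  refine ⟨P.toSubgroup.map K.subtype, fun g => ?_⟩
  obtain ⟨a, ha, P', e⟩ := hK.exists_conj_smul_eq P g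
  obtain ⟨R, hR⟩ := hK.exists_sylow_eq_mul hp P'
  refine ⟨a • R, ?_⟩
  rw [e, Sylow.coe_smul, hR, smul_mul', ← Subgroup.coe_pointwise_smul,
    Subgroup.conj_smul_eq_self_of_mem ha, Subgroup.coe_pointwise_smul]

/-- Elements of `p`-power order lift along surjections to elements of `p`-power order. -/
theorem exists_primary_lift [Finite G] {G' : Type*} [Group G'] {f : G →* G'}
    (hf : Function.Surjective f) {p : ℕ} [Fact p.Prime] {y : G'} (hy : ∃ k, y ^ p ^ k = 1) :
    ∃ x, f x = y ∧ ∃ k, x ^ p ^ k = 1 := by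
  obtain ⟨k, hk⟩ := hy
  obtain ⟨g, rfl⟩ := hf y
  obtain ⟨n, m, hm, hg⟩ := Nat.exists_eq_pow_mul_and_not_dvd (orderOf_pos g).ne' p
    (Fact.out : p.Prime).ne_one
  have hcop : Nat.Coprime m (orderOf (f g)) :=
    (((Fact.out : p.Prime).coprime_iff_not_dvd.2 hm).pow_left k).symm.coprime_dvd_right
      (orderOf_dvd_of_pow_eq_one hk)
  obtain ⟨u, hu⟩ := exists_pow_eq_self_of_coprime hcop
  refine ⟨(g ^ m) ^ u, by simpa using hu, n, ?_⟩
  rw [← pow_mul, ← pow_mul, show m * (u * p ^ n) = orderOf g * u by rw [hg]; ring, pow_mul,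
    pow_orderOf_eq_one, one_pow]

theorem PrimaryPermuting.of_surjective [Finite G] {G' : Type*} [Group G'] (h : PrimaryPermuting G)
    {f : G →* G'} (hf : Function.Surjective f) : PrimaryPermuting G' := by
  rintro p _ y hy
  obtain ⟨x, rfl, hx⟩ := exists_primary_lift hf hy
  obtain ⟨h₁, S, hS⟩ := h p x hx
  have hz : (Subgroup.zpowers (f x) : Set G') = f '' (Subgroup.zpowers x : Set G) := by
    rw [← MonoidHom.map_zpowers, Subgroup.coe_map]
  refine ⟨fun q _ hq Q => ?_, S.map f, fun g => ?_⟩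
  · obtain ⟨Q, rfl⟩ := Sylow.mapSurjective_surjective hf q Q
    have e : ((Q.mapSurjective hf : Sylow q G') : Set G') = f '' (Q : Set G) := rfl
    rw [hz, e, ← Set.image_mul, ← Set.image_mul, h₁ q hq Q]
  · obtain ⟨g, rfl⟩ := hf g
    obtain ⟨P, hP⟩ := hS g
    refine ⟨P.mapSurjective hf, ?_⟩
    have e : ((P.mapSurjective hf : Sylow p G') : Set G') = f '' (P : Set G) := rfl
    rw [e, hP, Set.image_mul, hz]
    congr 1
    ext y
    constructor
    · rintro ⟨_, ⟨s, hs, rfl⟩, rfl⟩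
      exact ⟨f s, ⟨s, hs, rfl⟩, by simp⟩
    · rintro ⟨_, ⟨s, hs, rfl⟩, rfl⟩
      exact ⟨_, ⟨s, hs, rfl⟩, by simp⟩

end PrimaryElements

section NormalSubgroups

variable {G : Type*} [Group G]

theorem Subgroup.eq_top_of_forall_exists_sylow_le [Finite G] {M : Subgroup G}
    (h : ∀ (p : ℕ) [Fact p.Prime], ∃ P : Sylow p G, (P : Subgroup G) ≤ M) : M = ⊤ := by
  rw [← Subgroup.index_eq_one]
  refine Nat.eq_one_iff_not_exists_prime_dvd.2 fun p hp hd => ?_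
  have : Fact p.Prime := ⟨hp⟩
  obtain ⟨P, hP⟩ := h p
  exact P.not_dvd_index (hd.trans (Subgroup.index_dvd_of_le hP))

theorem exists_mem_zpowers_orderOf_eq [Finite G] {p k : ℕ} [Fact p.Prime] {x : G}
    (hx : x ^ p ^ k = 1) (hx1 : x ≠ 1) : ∃ y ∈ Subgroup.zpowers x, orderOf y = p := by
  have hd : p ∣ Nat.card (Subgroup.zpowers x) := by
    refine (IsPGroup.zpowers hx).card_eq_or_dvd.resolve_left fun h1 => hx1 ?_
    rwa [Nat.card_zpowers, orderOf_eq_one_iff] at h1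
  obtain ⟨y, hy⟩ := exists_prime_orderOf_dvd_card' p hd
  exact ⟨y, y.2, by rw [Subgroup.orderOf_coe, hy]⟩

theorem IsPGroup.pow_pow_eq_one_of_mem {p : ℕ} {S : Subgroup G} (hS : IsPGroup p S) {x : G}
    (hx : x ∈ S) : ∃ k, x ^ p ^ k = 1 := by
  obtain ⟨k, hk⟩ := hS ⟨x, hx⟩
  exact ⟨k, by simpa using congrArg Subtype.val hk⟩

theorem eq_one_of_pow_eq_one_of_pow_pow_eq_one {p q k : ℕ} [hp : Fact p.Prime] [hq : Fact q.Prime]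
    (hqp : q ≠ p) {x : G} (h₁ : x ^ q = 1) (h₂ : x ^ p ^ k = 1) : x = 1 := by
  rw [← orderOf_eq_one_iff]
  exact Nat.eq_one_of_dvd_coprimes
    (((Nat.coprime_primes hq.out hp.out).2 hqp).pow_right k)
    (orderOf_dvd_of_pow_eq_one h₁) (orderOf_dvd_of_pow_eq_one h₂)

/-- A nontrivial finite solvable group has a nontrivial normal subgroup of prime power order. -/
theorem exists_normal_isPGroup_of_isSolvable [Finite G] [Group.IsSolvable G] [Nontrivial G] :
    ∃ q, q.Prime ∧ ∃ V : Subgroup G, V.Normal ∧ IsPGroup q V ∧ V ≠ ⊥ := by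
  obtain ⟨n, hn, hn'⟩ : ∃ n, derivedSeries G n ≠ ⊥ ∧ derivedSeries G (n + 1) = ⊥ := by
    by_contra! hcon
    obtain ⟨k, hk⟩ := Group.IsSolvable.solvable (G := G)
    have : ∀ n, derivedSeries G n ≠ ⊥ := by
      intro n
      induction n with
      | zero => exact top_ne_bot
      | succ n ih => exact hcon n ih
    exact this k hk
  set A := derivedSeries G n with hA
  have hAn : A.Normal := inferInstance
  have hcomm : ∀ a b : A, a * b = b * a := by
    intro a b
    have := Subgroup.commutator_mem_commutator a.2 b.2
    rw [← derivedSeries_succ, hn', Subgroup.mem_bot, commutatorElement_eq_one_iff_mul_comm] at this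
    exact Subtype.ext this
  obtain ⟨q, hq, hd⟩ := Nat.exists_prime_and_dvd (mt (A.card_eq_one).1 hn)
  have : Fact q.Prime := ⟨hq⟩
  obtain ⟨Q⟩ : Nonempty (Sylow q A) := inferInstance
  have hQn : Q.Normal := ⟨fun x hx a => by rwa [hcomm a x, mul_inv_cancel_right]⟩
  have := Q.characteristic_of_normal hQn
  refine ⟨q, hq, Q.toSubgroup.map A.subtype, ConjAct.normal_of_characteristic_of_normal,
    Q.2.map _, fun h => Q.ne_bot_of_dvd_card hd ?_⟩
  exact (Subgroup.map_eq_bot_iff_of_injective _ A.subtype_injective).1 h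

/-- A nontrivial normal `q`-subgroup contains a nontrivial element centralised by a given Sylow
`q`-subgroup. -/
theorem IsPGroup.exists_mem_forall_commute_sylow [Finite G] {q : ℕ} [Fact q.Prime]
    {V : Subgroup G} [V.Normal] (hV : IsPGroup q V) (hV1 : V ≠ ⊥) (Q : Sylow q G) :
    ∃ v ∈ V, v ≠ 1 ∧ ∀ g ∈ Q, g * v * g⁻¹ = v := by
  let _ : MulAction Q V :=
    MulAction.compHom V ((MulAut.conjNormal (H := V)).comp (Q : Subgroup G).subtype)
  have hd : q ∣ Nat.card V := hV.card_eq_or_dvd.resolve_left (mt V.card_eq_one.1 hV1)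
  have h1 : (1 : V) ∈ MulAction.fixedPoints Q V := fun g => map_one (MulAut.conjNormal (g : G))
  obtain ⟨v, hv, hv1⟩ := Q.2.exists_fixed_point_of_prime_dvd_card_of_fixed_point V hd h1
  refine ⟨v, v.2, fun h => hv1 (Subtype.ext h.symm), fun g hg => ?_⟩
  have := congrArg Subtype.val (hv ⟨g, hg⟩)
  exact this

theorem PrimaryPermuting.exists_normal_card_eq_prime [Finite G] (h : PrimaryPermuting G) {q : ℕ}
    [Fact q.Prime] {V : Subgroup G} [V.Normal] (hV : IsPGroup q V) (hV1 : V ≠ ⊥) :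
    ∃ N : Subgroup G, N.Normal ∧ Nat.card N = q := by
  obtain ⟨Q⟩ : Nonempty (Sylow q G) := inferInstance
  obtain ⟨v, hvV, hv1, hvQ⟩ := hV.exists_mem_forall_commute_sylow hV1 Q
  obtain ⟨k, hk⟩ := hV.pow_pow_eq_one_of_mem hvV
  obtain ⟨z, hz, hzq⟩ := exists_mem_zpowers_orderOf_eq hk hv1
  have hzV : z ∈ V := (Subgroup.zpowers_le.2 hvV) hz
  have hzpow : z ^ q ^ 1 = 1 := by rw [pow_one, ← hzq, pow_orderOf_eq_one]
  refine ⟨Subgroup.zpowers z, ?_, by rw [Nat.card_zpowers, hzq]⟩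
  rw [← Subgroup.normalizer_eq_top_iff]
  refine Subgroup.eq_top_of_forall_exists_sylow_le fun r _ => ?_
  have key : ∀ R : Subgroup G, (∀ g ∈ R, g * z * g⁻¹ ∈ Subgroup.zpowers z) →
      R ≤ Subgroup.normalizer (Subgroup.zpowers z : Set G) := by
    intro R hR
    have hle : ∀ g ∈ R, ∀ y ∈ Subgroup.zpowers z, g * y * g⁻¹ ∈ Subgroup.zpowers z := by
      rintro g hg _ ⟨i, rfl⟩
      have := (Subgroup.zpowers z).zpow_mem (hR g hg) i
      simpa [conj_zpow] using this
    intro g hg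
    rw [Subgroup.mem_normalizer_iff]
    refine fun y => ⟨hle g hg y, fun hy => ?_⟩
    have := hle g⁻¹ (R.inv_mem hg) _ hy
    simpa [mul_assoc] using this
  rcases eq_or_ne r q with rfl | hrq
  · refine ⟨Q, key _ fun g hg => ?_⟩
    obtain ⟨i, rfl⟩ := hz
    have : g * v ^ i * g⁻¹ = v ^ i := by rw [← conj_zpow, hvQ g hg]
    simp only [this]
    exact Subgroup.mem_zpowers _
  · obtain ⟨R⟩ : Nonempty (Sylow r G) := inferInstance
    refine ⟨R, key _ fun g hg => ?_⟩
    have hperm := (h q z ⟨1, hzpow⟩).1 r hrq R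
    have hmem : g * z ∈ (Subgroup.zpowers z : Set G) * (R : Set G) := by
      rw [hperm]
      exact Set.mul_mem_mul hg (Subgroup.mem_zpowers z)
    obtain ⟨y, hy, g', hg', e⟩ := hmem
    have hdisj := IsPGroup.disjoint_of_ne r q hrq _ _ R.2 hV
    have hyV : y ∈ V := (Subgroup.zpowers_le.2 hzV) hy
    have e' : g * z * g⁻¹ = y * (g' * g⁻¹) := by rw [← e]; simp [mul_assoc]
    have hg1 : g' * g⁻¹ = 1 := by
      refine Subgroup.disjoint_def.1 hdisj
        ((R : Subgroup G).mul_mem hg' ((R : Subgroup G).inv_mem hg)) ?_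
      have : g' * g⁻¹ = y⁻¹ * (g * z * g⁻¹) := by rw [e']; simp
      rw [this]
      exact V.mul_mem (V.inv_mem hyV) (Subgroup.Normal.conj_mem inferInstance z hzV g)
    rw [e', hg1, mul_one]
    exact hy

theorem Sylow.exists_smul_eq_of_le_sup [Finite G] {p : ℕ} [Fact p.Prime] {N : Subgroup G}
    [N.Normal] {P P' : Sylow p G} (h : (P' : Subgroup G) ≤ N ⊔ P) : ∃ m ∈ N, m • P = P' := by
  have hP : (P : Subgroup G) ≤ N ⊔ P := le_sup_right
  obtain ⟨⟨g, hg⟩, e⟩ := MulAction.exists_smul_eq (N ⊔ P : Subgroup G) (P.subtype hP)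
    (P'.subtype h)
  rw [Sylow.smul_subtype] at e
  have e' := Sylow.subtype_injective e
  rw [← SetLike.mem_coe, Subgroup.normal_mul] at hg
  obtain ⟨m, hm, u, hu, rfl⟩ := hg
  refine ⟨m, hm, ?_⟩
  rw [← e']
  change m • P = (m * u) • P
  rw [mul_smul, Sylow.smul_eq_iff_mem_normalizer.2 (Subgroup.le_normalizer hu)]

/-- If `x` acts nontrivially on a normal subgroup `N` of prime order `q ≠ p`, then the partner of
`x` centralises `N`. -/
theorem PrimaryPermuting.exists_partner_le_centralizer [Finite G] (h : PrimaryPermuting G)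
    {p q : ℕ} [Fact p.Prime] [Fact q.Prime] (hqp : q ≠ p) {N : Subgroup G} [N.Normal]
    (hN : Nat.card N = q) {x : G} (hx : ∃ k, x ^ p ^ k = 1)
    (hxN : x ∉ Subgroup.centralizer (N : Set G)) :
    ∃ S ≤ Subgroup.centralizer (N : Set G), ∀ g : G, ∃ P : Sylow p G,
      (P : Set G) = (Subgroup.zpowers x : Set G) * ((MulAut.conj g • S : Subgroup G) : Set G) := by
  obtain ⟨-, S, hS⟩ := h p x hx
  refine ⟨S, fun s hs => ?_, hS⟩
  obtain ⟨P, hP⟩ := hS 1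
  rw [map_one, one_smul] at hP
  have hxP : x ∈ P := by
    rw [← SetLike.mem_coe, hP]
    exact ⟨x, Subgroup.mem_zpowers x, 1, S.one_mem, mul_one x⟩
  have hSP : S ≤ P := fun y hy => by
    have : y ∈ (P : Set G) := by
      rw [hP]
      exact ⟨1, Subgroup.one_mem _, y, hy, one_mul y⟩
    exact this
  have hNq : IsPGroup q N := IsPGroup.of_card (n := 1) (by rw [hN, pow_one])
  have hdisj := IsPGroup.disjoint_of_ne q p hqp _ _ hNq P.2
  have hfix : ∀ m ∈ N, m * x = x * m → m = 1 := by
    intro m hm hmx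
    by_contra hm1
    refine hxN (Subgroup.mem_centralizer_iff.2 fun n hn => ?_)
    obtain ⟨i, hi⟩ := mem_zpowers_of_prime_card hN (g := ⟨m, hm⟩) (g' := ⟨n, hn⟩)
      (fun e => hm1 (congrArg Subtype.val e))
    have : n = m ^ i := by simpa using (congrArg Subtype.val hi).symm
    rw [this]
    exact (Commute.zpow_left (show Commute m x from hmx) i).eq
  refine Subgroup.mem_centralizer_iff.2 fun n hn => ?_
  obtain ⟨P', hP'⟩ := hS n
  have hxP' : x ∈ P' := by
    rw [← SetLike.mem_coe, hP']
    exact ⟨x, Subgroup.mem_zpowers x, 1, Subgroup.one_mem _, mul_one x⟩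
  have hsP' : n * s * n⁻¹ ∈ P' := by
    rw [← SetLike.mem_coe, hP']
    exact ⟨1, Subgroup.one_mem _, _, ⟨s, hs, rfl⟩, one_mul _⟩
  have hle : (P' : Subgroup G) ≤ N ⊔ P := by
    intro y hy
    have hy' : y ∈ (P' : Set G) := hy
    rw [hP'] at hy'
    obtain ⟨a, ha, _, ⟨t, ht, rfl⟩, rfl⟩ := hy'
    have hnW : n ∈ N ⊔ (P : Subgroup G) := le_sup_left (a := N) hn
    have hPW : (P : Subgroup G) ≤ N ⊔ P := le_sup_right
    refine Subgroup.mul_mem _ (hPW ((Subgroup.zpowers_le.2 hxP) ha)) ?_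
    exact Subgroup.mul_mem _ (Subgroup.mul_mem _ hnW (hPW (hSP ht))) (Subgroup.inv_mem _ hnW)
  obtain ⟨m, hm, e⟩ := Sylow.exists_smul_eq_of_le_sup hle
  have hm1 : m = 1 := by
    refine hfix m hm ?_
    rw [← e] at hxP'
    obtain ⟨u, hu, hu'⟩ := hxP'
    have hu' : m * u * m⁻¹ = x := hu'
    have h1 : x⁻¹ * m⁻¹ * x * m = 1 := by
      refine Subgroup.disjoint_def.1 hdisj ?_ ?_
      · have := Subgroup.Normal.conj_mem inferInstance m⁻¹ (N.inv_mem hm) x⁻¹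
        rw [inv_inv] at this
        exact N.mul_mem this hm
      · have : x⁻¹ * m⁻¹ * x * m = x⁻¹ * u := by rw [← hu']; group
        rw [this]
        exact (P : Subgroup G).mul_mem ((P : Subgroup G).inv_mem hxP) hu
    have : x * m = m * x * (x⁻¹ * m⁻¹ * x * m) := by group
    rw [this, h1, mul_one]
  rw [hm1, one_smul] at e
  rw [← e] at hsP'
  have h1 : n * s * n⁻¹ * s⁻¹ = 1 := by
    refine Subgroup.disjoint_def.1 hdisj ?_
      ((P : Subgroup G).mul_mem hsP' ((P : Subgroup G).inv_mem (hSP hs)))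
    rw [mul_assoc, mul_assoc, ← mul_assoc s]
    exact N.mul_mem hn (Subgroup.Normal.conj_mem inferInstance n⁻¹ (N.inv_mem hn) s)
  have : n * s = (n * s * n⁻¹ * s⁻¹) * (s * n) := by group
  rw [this, h1, one_mul]

/-- If `G` has no nontrivial normal `p`-subgroup, `N` is normal and `T / N` is a normal `p`-subgroup
of `G / N`, then the only element of `p`-power order in `T` that centralises `N` is `1`. -/
theorem eq_one_of_mem_of_mem_centralizer [Finite G] {p : ℕ} [Fact p.Prime]
    (hO : ∀ V : Subgroup G, V.Normal → IsPGroup p V → V = ⊥) {N T : Subgroup G} [N.Normal]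
    [T.Normal] (hT : ∀ t ∈ T, ∃ k, t ^ p ^ k ∈ N) {x : G} (hxT : x ∈ T)
    (hxN : x ∈ Subgroup.centralizer (N : Set G)) (hx : ∃ k, x ^ p ^ k = 1) : x = 1 := by
  set U := T ⊓ Subgroup.centralizer (N : Set G) with hU
  have hUn : U.Normal := inferInstance
  have hquot : IsPGroup p (U ⧸ N.subgroupOf U) := by
    rw [isPGroup_iff_pow_pow_eq_one]
    intro g
    induction g using QuotientGroup.induction_on with
    | H u =>
      obtain ⟨k, hk⟩ := hT u u.2.1
      refine ⟨k, ?_⟩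
      rw [← QuotientGroup.mk_pow, QuotientGroup.eq_one_iff]
      exact hk
  have hquot_nil : Group.IsNilpotent (U ⧸ N.subgroupOf U) := hquot.isNilpotent
  have hnil : Group.IsNilpotent U := by
    refine Subgroup.isNilpotent_of_ker_le_center (QuotientGroup.mk' (N.subgroupOf U)) ?_
    rw [QuotientGroup.ker_mk']
    intro n hn
    rw [Subgroup.mem_center_iff]
    intro u
    exact Subtype.ext (Subgroup.mem_centralizer_iff.1 u.2.2 n hn).symm
  obtain ⟨k, hk⟩ := hx
  have hxU : x ∈ U := ⟨hxT, hxN⟩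
  obtain ⟨Y, hY⟩ := (IsPGroup.zpowers (x := (⟨x, hxU⟩ : U)) (p := p) (k := k)
    (Subtype.ext hk)).exists_le_sylow
  have hYn : Y.Normal :=
    ((Group.isNilpotent_of_finite_tfae (G := U)).out 0 3 rfl rfl).1 hnil p inferInstance Y
  have := Y.characteristic_of_normal hYn
  have hbot := hO (Y.toSubgroup.map U.subtype) ConjAct.normal_of_characteristic_of_normal
    (Y.2.map _)
  have hmem : x ∈ Y.toSubgroup.map U.subtype := ⟨⟨x, hxU⟩, hY (Subgroup.mem_zpowers _), rfl⟩
  rwa [hbot, Subgroup.mem_bot] at hmem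

/-- A homomorphism onto an abelian group under which a Sylow `p`-subgroup has image of order `p`
provides a normal subgroup of index `p` whose elements of `p`-power order lie in the kernel. -/
theorem Sylow.exists_normal_index_eq [Finite G] {A : Type*} [CommGroup A] {φ : G →* A}
    (hφ : Function.Surjective φ) {p : ℕ} [Fact p.Prime] (P : Sylow p G)
    (hP : Nat.card (P.toSubgroup.map φ) = p) :
    ∃ K : Subgroup G, K.Normal ∧ K.index = p ∧ ∀ y ∈ K, (∃ k, y ^ p ^ k = 1) → φ y = 1 := by
  have : Finite A := Finite.of_surjective φ hφ
  have hcop : Nat.Coprime (Nat.card (P.toSubgroup.map φ)) (P.toSubgroup.map φ).index :=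
    (P.mapSurjective hφ).card_coprime_index
  obtain ⟨B, hB⟩ := Subgroup.exists_right_complement'_of_coprime hcop
  refine ⟨B.comap φ, inferInstance, ?_, ?_⟩
  · rw [Subgroup.index_comap_of_surjective _ hφ, hB.index_eq_card, hP]
  · rintro y hy ⟨k, hk⟩
    have hz : IsPGroup p (Subgroup.zpowers (φ y)) :=
      IsPGroup.zpowers (k := k) (by rw [← map_pow, hk, map_one])
    refine Subgroup.disjoint_def.1 hB.disjoint ?_ hy
    exact hz.le_sylow_of_normal (P.mapSurjective hφ) (Subgroup.mem_zpowers _)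

end NormalSubgroups

section Structure

variable {G : Type*} [Group G]

/-- The situation of a group without nontrivial normal `p`-subgroups, a normal subgroup `N` of prime
order `q ≠ p` and a normal subgroup `T ≥ N` with `T / N` a `p`-group: if `x ∈ T` has order `p`, then
the centraliser of `N` has no elements of order `p`. -/
theorem PrimaryPermuting.orderOf_ne_of_mem_centralizer [Finite G] (h : PrimaryPermuting G)
    {p q : ℕ} [Fact p.Prime] [Fact q.Prime] (hqp : q ≠ p)
    (hO : ∀ V : Subgroup G, V.Normal → IsPGroup p V → V = ⊥) {N T : Subgroup G} [N.Normal]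
    [T.Normal] (hN : Nat.card N = q) (hT : ∀ t ∈ T, ∃ k, t ^ p ^ k ∈ N) {x : G} (hxT : x ∈ T)
    (hx : orderOf x = p) {y : G} (hyN : y ∈ Subgroup.centralizer (N : Set G)) :
    orderOf y ≠ p := by
  intro hy
  set C := Subgroup.centralizer (N : Set G) with hC
  have hCn : C.Normal := inferInstance
  have hNpow : ∀ n ∈ N, n ^ q = 1 := fun n hn => by
    have := pow_card_eq_one' (x := (⟨n, hn⟩ : N))
    rw [hN] at this
    simpa using congrArg Subtype.val this
  have hTC : ∀ u ∈ T, u ∈ C → u ∈ N := by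
    intro u huT huC
    obtain ⟨k, hk⟩ := hT u huT
    have huq : u ^ q = 1 := by
      refine eq_one_of_mem_of_mem_centralizer hO hT (T.pow_mem huT q) (C.pow_mem huC q) ⟨k, ?_⟩
      rw [← pow_mul, mul_comm, pow_mul, hNpow _ hk]
    have h1 : ((u : G) : G ⧸ N) = 1 := by
      refine eq_one_of_pow_eq_one_of_pow_pow_eq_one hqp (k := k) ?_ ?_
      · rw [← QuotientGroup.mk_pow, huq, QuotientGroup.mk_one]
      · rwa [← QuotientGroup.mk_pow, QuotientGroup.eq_one_iff]
    rwa [QuotientGroup.eq_one_iff] at h1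
  have hcomm : ∀ s ∈ C, (∃ k, s ^ p ^ k = 1) → Commute s x := by
    rintro s hsC ⟨k, hk⟩
    obtain ⟨n, hn⟩ : ∃ n, n = s * x * s⁻¹ * x⁻¹ := ⟨_, rfl⟩
    have hnN : n ∈ N := by
      refine hTC n ?_ ?_
      · rw [hn]
        exact T.mul_mem (Subgroup.Normal.conj_mem inferInstance x hxT s) (T.inv_mem hxT)
      · rw [hn, mul_assoc, mul_assoc, ← mul_assoc x]
        exact C.mul_mem hsC (hCn.conj_mem s⁻¹ (C.inv_mem hsC) x)
    have hsn : Commute s n := (Subgroup.mem_centralizer_iff.1 hsC n hnN).symm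
    have hpow : ∀ j : ℕ, s ^ j * x = n ^ j * x * s ^ j := by
      intro j
      induction j with
      | zero => simp
      | succ j ih =>
        have h1 : s * x = n * x * s := by rw [hn]; group
        calc s ^ (j + 1) * x = s * (s ^ j * x) := by rw [pow_succ', mul_assoc]
          _ = s * n ^ j * x * s ^ j := by rw [ih]; simp only [mul_assoc]
          _ = n ^ j * (s * x) * s ^ j := by rw [(hsn.pow_right j).eq]; simp only [mul_assoc]
          _ = n ^ (j + 1) * x * s ^ (j + 1) := by
            rw [h1, pow_succ n, pow_succ' s]; simp only [mul_assoc]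
    have hn1 : n = 1 := by
      refine eq_one_of_pow_eq_one_of_pow_pow_eq_one hqp (k := k) (hNpow n hnN) ?_
      have := hpow (p ^ k)
      rw [hk, one_mul, mul_one] at this
      exact mul_eq_right.1 this.symm
    have := hpow 1
    rwa [hn1, pow_one, one_pow, one_mul] at this
  have hpx : x ^ p = 1 := by rw [← hx, pow_orderOf_eq_one]
  have hpy : y ^ p = 1 := by rw [← hy, pow_orderOf_eq_one]
  have hxC : ∀ i : ℤ, x ^ i ∈ C → x ^ i = 1 := fun i hi =>
    eq_one_of_mem_of_mem_centralizer hO hT (T.zpow_mem hxT i) hi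
      ⟨1, by rw [pow_one, ← zpow_natCast, zpow_comm, zpow_natCast, hpx, one_zpow]⟩
  have hyx : Commute y x := hcomm y hyN ⟨1, by rwa [pow_one]⟩
  have hp1 : p ≠ 1 := (Fact.out : p.Prime).ne_one
  have hzC : x * y ∉ C := by
    intro hz
    have : x ∈ C := by simpa using C.mul_mem hz (C.inv_mem hyN)
    have hx1 := hxC 1 (by rwa [zpow_one])
    rw [zpow_one] at hx1
    exact hp1 (by rw [← hx, hx1, orderOf_one])
  have hz : ∃ k, (x * y) ^ p ^ k = 1 :=
    ⟨1, by rw [pow_one, hyx.symm.mul_pow, hpx, hpy, one_mul]⟩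
  obtain ⟨S, hSC, hS⟩ := h.exists_partner_le_centralizer hqp hN hz hzC
  have hyS : ∀ g : G, y ∈ MulAut.conj g • S := by
    intro g
    obtain ⟨P, hP⟩ := hS g
    have hSgC : MulAut.conj g • S ≤ C := by
      rintro _ ⟨s, hs, rfl⟩
      exact hCn.conj_mem s (hSC hs) g
    have hSgP : MulAut.conj g • S ≤ P := by
      intro s hs
      rw [← SetLike.mem_coe, Sylow.coe_coe, hP]
      exact ⟨1, Subgroup.one_mem _, s, hs, one_mul s⟩
    have hzP : x * y ∈ P := by
      rw [← SetLike.mem_coe, hP]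
      exact ⟨x * y, Subgroup.mem_zpowers _, 1, Subgroup.one_mem _, mul_one _⟩
    have hcent : ∀ u ∈ P, Commute x u := by
      intro u hu
      rw [← SetLike.mem_coe, hP] at hu
      obtain ⟨_, ⟨i, rfl⟩, s, hs, rfl⟩ := hu
      refine Commute.mul_right ?_
        (hcomm s (hSgC hs) (P.2.pow_pow_eq_one_of_mem (hSgP hs))).symm
      exact ((Commute.refl x).mul_right hyx.symm).zpow_right i
    have hxP : x ∈ P := by
      have hxp : IsPGroup p (Subgroup.zpowers x) := IsPGroup.zpowers (k := 1) (by rwa [pow_one])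
      have hxn : x ∈ Subgroup.zpowers x ⊓ Subgroup.normalizer (P : Set G) := by
        refine ⟨Subgroup.mem_zpowers x, ?_⟩
        refine Subgroup.mem_normalizer_iff.2 fun u => ⟨fun hu => ?_, fun hu => ?_⟩
        · rw [(hcent u hu).eq, mul_inv_cancel_right]
          exact hu
        · have := (hcent _ hu).eq
          have hu' : x * u * x⁻¹ = u := by
            have h2 : x * (x * u * x⁻¹) = x * u := by rw [this]; group
            exact mul_left_cancel h2
          rwa [hu'] at hu
      rw [hxp.inf_normalizer_sylow P] at hxn
      exact hxn.2
    have hyP : y ∈ (P : Set G) := by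
      have := (P : Subgroup G).mul_mem ((P : Subgroup G).inv_mem hxP) hzP
      rw [inv_mul_cancel_left] at this
      exact this
    rw [hP] at hyP
    obtain ⟨_, ⟨i, rfl⟩, s, hs, e⟩ := hyP
    have e : (x * y) ^ i * s = y := e
    have hi : (x * y) ^ i = x ^ i * y ^ i := hyx.symm.mul_zpow i
    have hxi : x ^ i = 1 := by
      refine hxC i ?_
      have : x ^ i = y * s⁻¹ * (y ^ i)⁻¹ := by
        rw [hi] at e
        exact eq_mul_inv_of_mul_eq (eq_mul_inv_of_mul_eq e)
      rw [this]
      exact C.mul_mem (C.mul_mem hyN (C.inv_mem (hSgC hs))) (C.inv_mem (C.zpow_mem hyN i))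
    have hyi : y ^ i = 1 := by
      rw [← orderOf_dvd_iff_zpow_eq_one] at hxi ⊢
      rwa [hy, ← hx]
    rw [hi, hxi, hyi, one_mul, one_mul] at e
    rwa [← e]
  have hcore : y ∈ S.normalCore := by
    intro g
    obtain ⟨s, hs, e⟩ := hyS g⁻¹
    have e : g⁻¹ * s * g⁻¹⁻¹ = y := e
    rw [← e]
    simpa [mul_assoc] using hs
  have hSp : IsPGroup p S := by
    obtain ⟨P, hP⟩ := hS 1
    rw [map_one, one_smul] at hP
    refine P.2.to_le fun s hs => ?_
    rw [← SetLike.mem_coe, Sylow.coe_coe, hP]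
    exact ⟨1, Subgroup.one_mem _, s, hs, one_mul s⟩
  rw [hO _ inferInstance (hSp.to_le S.normalCore_le), Subgroup.mem_bot] at hcore
  exact hp1 (by rw [← hy, hcore, orderOf_one])

/-- In a finite solvable group satisfying `PrimaryPermuting` there is, for every prime `p`, a
normal subgroup of index `1` or `p` with a normal Sylow `p`-subgroup. -/
theorem PrimaryPermuting.exists_normal_index_dvd [Finite G] [Group.IsSolvable G]
    (h : PrimaryPermuting G) (p : ℕ) [Fact p.Prime] :
    ∃ K T : Subgroup G, K.Normal ∧ T.Normal ∧ IsPGroup p T ∧ K.index ∣ p ∧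
      ∀ x ∈ K, (∃ k, x ^ p ^ k = 1) → x ∈ T := by
  induction hc : Nat.card G using Nat.strong_induction_on generalizing G with
  | _ n ih =>
  subst hc
  have hquot : ∀ N : Subgroup G, N.Normal → N ≠ ⊥ →
      ∃ K T : Subgroup G, K.Normal ∧ T.Normal ∧ (∀ t ∈ T, ∃ k, t ^ p ^ k ∈ N) ∧ K.index ∣ p ∧
        ∀ x ∈ K, (∃ k, x ^ p ^ k = 1) → x ∈ T := by
    intro N hNn hN
    have hlt : Nat.card (G ⧸ N) < Nat.card G := by
      rw [← Subgroup.index, ← N.card_mul_index]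
      exact lt_mul_of_one_lt_left (Nat.pos_of_ne_zero N.index_ne_zero_of_finite)
        (N.one_lt_card_iff_ne_bot.2 hN)
    have hsurj := QuotientGroup.mk'_surjective N
    obtain ⟨K, T, hK, hT, hTp, hKi, hKT⟩ := ih _ hlt (h.of_surjective hsurj) rfl
    refine ⟨K.comap (QuotientGroup.mk' N), T.comap (QuotientGroup.mk' N), inferInstance,
      inferInstance, fun t ht => ?_, ?_, fun x hx hxp => ?_⟩
    · obtain ⟨k, hk⟩ := hTp.pow_pow_eq_one_of_mem ht
      refine ⟨k, ?_⟩
      rwa [← map_pow, QuotientGroup.mk'_apply, QuotientGroup.eq_one_iff] at hk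
    · rwa [Subgroup.index_comap_of_surjective _ hsurj]
    · obtain ⟨k, hk⟩ := hxp
      exact hKT _ hx ⟨k, by rw [← map_pow, hk, map_one]⟩
  by_cases hO : ∀ V : Subgroup G, V.Normal → IsPGroup p V → V = ⊥
  · rcases subsingleton_or_nontrivial G with hG | hG
    · refine ⟨⊤, ⊥, inferInstance, inferInstance, IsPGroup.of_bot, by simp, fun x _ _ => ?_⟩
      rw [Subgroup.mem_bot]
      exact Subsingleton.elim _ _
    obtain ⟨q, hq, V, hVn, hV, hV1⟩ := exists_normal_isPGroup_of_isSolvable (G := G)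
    have : Fact q.Prime := ⟨hq⟩
    have hqp : q ≠ p := by
      rintro rfl
      exact hV1 (hO V hVn hV)
    obtain ⟨N, hNn, hN⟩ := h.exists_normal_card_eq_prime hV hV1
    have hN1 : N ≠ ⊥ := fun e => hq.ne_one (by rw [← hN, e, Subgroup.card_bot])
    obtain ⟨K, T, hK, hTn, hT, hKi, hKT⟩ := hquot N hNn hN1
    by_cases hTp : ∀ x ∈ T, (∃ k, x ^ p ^ k = 1) → x = 1
    · exact ⟨K, ⊥, hK, inferInstance, IsPGroup.of_bot, hKi,
        fun x hx hxp => Subgroup.mem_bot.2 (hTp x (hKT x hx hxp) hxp)⟩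
    push Not at hTp
    obtain ⟨w, hwT, ⟨k, hk⟩, hw1⟩ := hTp
    obtain ⟨x, hxw, hx⟩ := exists_mem_zpowers_orderOf_eq hk hw1
    have hxT : x ∈ T := (Subgroup.zpowers_le.2 hwT) hxw
    have hxp : ∃ k, x ^ p ^ k = 1 := ⟨1, by rw [pow_one, ← hx, pow_orderOf_eq_one]⟩
    have hxC : x ∉ Subgroup.centralizer (N : Set G) := by
      intro hxC
      have := eq_one_of_mem_of_mem_centralizer hO hT hxT hxC hxp
      exact (Fact.out : p.Prime).ne_one (by rw [← hx, this, orderOf_one])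
    obtain ⟨S, hSC, hS⟩ := h.exists_partner_le_centralizer hqp hN hxp hxC
    obtain ⟨P, hP⟩ := hS 1
    rw [map_one, one_smul] at hP
    have hcyc : IsCyclic N := isCyclic_of_prime_card hN
    let ψ : G →* (ZMod (Nat.card N))ˣ :=
      (IsCyclic.mulAutMulEquiv N).toMonoidHom.comp (MulAut.conjNormal (H := N))
    have hψ : ∀ g : G, ψ.rangeRestrict g = 1 ↔ g ∈ Subgroup.centralizer (N : Set G) := by
      intro g
      rw [← MonoidHom.mem_ker, MonoidHom.ker_rangeRestrict, MonoidHom.mem_ker,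
        Subgroup.mem_centralizer_iff]
      change (IsCyclic.mulAutMulEquiv N) (MulAut.conjNormal g) = 1 ↔ _
      rw [map_eq_one_iff _ (IsCyclic.mulAutMulEquiv N).injective]
      constructor
      · intro e n hn
        have := congrArg Subtype.val (DFunLike.congr_fun e ⟨n, hn⟩)
        have this : g * n * g⁻¹ = n := by simpa using this
        rw [mul_inv_eq_iff_eq_mul] at this
        exact this.symm
      · intro e
        ext n
        simp [← e n n.2]
    have himage : P.toSubgroup.map ψ.rangeRestrict = Subgroup.zpowers (ψ.rangeRestrict x) := by
      apply le_antisymm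
      · rintro _ ⟨u, hu, rfl⟩
        have hu : u ∈ (P : Set G) := hu
        rw [hP] at hu
        obtain ⟨_, ⟨i, rfl⟩, s, hs, rfl⟩ := hu
        refine ⟨i, ?_⟩
        change (ψ.rangeRestrict x) ^ i = ψ.rangeRestrict (x ^ i * s)
        rw [map_mul, (hψ s).2 (hSC hs), mul_one, map_zpow]
      · rw [Subgroup.zpowers_le]
        refine ⟨x, ?_, rfl⟩
        rw [Sylow.coe_coe, hP]
        exact ⟨x, Subgroup.mem_zpowers x, 1, S.one_mem, mul_one x⟩
    have hcard : Nat.card (P.toSubgroup.map ψ.rangeRestrict) = p := by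
      rw [himage, Nat.card_zpowers]
      refine orderOf_eq_prime ?_ (mt (hψ x).1 hxC)
      rw [← map_pow, ← hx, pow_orderOf_eq_one, map_one]
    obtain ⟨L, hL, hLi, hLp⟩ := P.exists_normal_index_eq ψ.rangeRestrict_surjective hcard
    refine ⟨L, ⊥, hL, inferInstance, IsPGroup.of_bot, hLi.dvd, fun y hy hyp => ?_⟩
    by_contra hy1
    obtain ⟨k, hk⟩ := hyp
    obtain ⟨y', hy'y, hy'⟩ := exists_mem_zpowers_orderOf_eq hk hy1
    exact h.orderOf_ne_of_mem_centralizer hqp hO hN hT hxT hx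
      ((Subgroup.zpowers_le.2 ((hψ y).1 (hLp y hy ⟨k, hk⟩))) hy'y) hy'
  · push Not at hO
    obtain ⟨V, hVn, hV, hV1⟩ := hO
    obtain ⟨K, T, hK, hTn, hT, hKi, hKT⟩ := hquot V hVn hV1
    refine ⟨K, T, hK, hTn, ?_, hKi, hKT⟩
    intro t
    obtain ⟨k, hk⟩ := hT t t.2
    obtain ⟨m, hm⟩ := hV.pow_pow_eq_one_of_mem hk
    exact ⟨k + m, Subtype.ext (by rw [pow_add, pow_mul]; exact hm)⟩

end Structure

section Supplements

variable {G : Type*} [Group G]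

theorem Subgroup.mem_of_pow_pow_eq_one_of_index_dvd {p q k : ℕ} [Fact p.Prime]
    [Fact q.Prime] (hqp : q ≠ p) {K : Subgroup G} [K.Normal] (hK : K.index ∣ q) {x : G}
    (hx : x ^ p ^ k = 1) : x ∈ K := by
  rw [← QuotientGroup.eq_one_iff]
  refine eq_one_of_pow_eq_one_of_pow_pow_eq_one hqp (k := k) ?_ ?_
  · obtain ⟨c, rfl⟩ := hK
    rw [pow_mul, Subgroup.index, pow_card_eq_one', one_pow]
  · rw [← QuotientGroup.mk_pow, hx, QuotientGroup.mk_one]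

theorem Subgroup.closure_primary_eq_top [Finite G] :
    Subgroup.closure {x : G | ∃ q k : ℕ, q.Prime ∧ x ^ q ^ k = 1} = ⊤ := by
  refine Subgroup.eq_top_of_forall_exists_sylow_le fun p hp => ?_
  obtain ⟨P⟩ : Nonempty (Sylow p G) := inferInstance
  refine ⟨P, fun x hx => Subgroup.subset_closure ?_⟩
  obtain ⟨k, hk⟩ := P.2.pow_pow_eq_one_of_mem hx
  exact ⟨p, k, hp.out, hk⟩

/-- To permute with a subgroup `B` it suffices that the elements `x` of prime power order satisfy
`x B ⊆ B A`. -/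
theorem Subgroup.mul_comm_of_forall_primary [Finite G] {A B : Subgroup G}
    (h : ∀ q k : ℕ, q.Prime → ∀ x ∈ A, x ^ q ^ k = 1 →
      ∀ b ∈ B, x * b ∈ (B : Set G) * (A : Set G)) :
    (A : Set G) * (B : Set G) = (B : Set G) * (A : Set G) := by
  suffices key : ∀ a : A, (∀ b ∈ B, (a : G) * b ∈ (B : Set G) * (A : Set G)) ∧
      ∀ b ∈ B, ((a⁻¹ : A) : G) * b ∈ (B : Set G) * (A : Set G) from
    Subgroup.mul_comm_of_mul_subset fun a ha => (key ⟨a, ha⟩).1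
  have hmul : ∀ x y : G, (∀ b ∈ B, x * b ∈ (B : Set G) * (A : Set G)) →
      (∀ b ∈ B, y * b ∈ (B : Set G) * (A : Set G)) →
      ∀ b ∈ B, x * y * b ∈ (B : Set G) * (A : Set G) := by
    intro x y hx hy b hb
    obtain ⟨b₁, hb₁, a₁, ha₁, e₁⟩ := hy b hb
    obtain ⟨b₂, hb₂, a₂, ha₂, e₂⟩ := hx b₁ hb₁
    refine ⟨b₂, hb₂, a₂ * a₁, A.mul_mem ha₂ ha₁, ?_⟩
    change b₂ * (a₂ * a₁) = x * y * b
    change b₁ * a₁ = y * b at e₁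
    change b₂ * a₂ = x * b₁ at e₂
    rw [← mul_assoc, e₂, mul_assoc, e₁, mul_assoc]
  intro a
  have ha : a ∈ Subgroup.closure {x : A | ∃ q k : ℕ, q.Prime ∧ x ^ q ^ k = 1} := by
    rw [Subgroup.closure_primary_eq_top]
    exact Subgroup.mem_top a
  induction ha using Subgroup.closure_induction with
  | mem x hx =>
    obtain ⟨q, k, hq, hx⟩ := hx
    exact ⟨h q k hq x x.2 (congrArg Subtype.val hx),
      h q k hq _ (x⁻¹).2 (congrArg Subtype.val (by rw [inv_pow, hx, inv_one] : x⁻¹ ^ q ^ k = 1))⟩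
  | one =>
    have : ∀ b ∈ B, ((1 : A) : G) * b ∈ (B : Set G) * (A : Set G) := fun b hb =>
      ⟨b, hb, 1, A.one_mem, by simp⟩
    exact ⟨this, by rwa [inv_one]⟩
  | mul x y _ _ hx hy =>
    refine ⟨hmul x y hx.1 hy.1, ?_⟩
    rw [mul_inv_rev]
    exact hmul _ _ hy.2 hx.2
  | inv x _ hx => exact ⟨hx.2, by rw [inv_inv]; exact hx.1⟩

/-- If `H` is not contained in the normal subgroup `K` of index `p`, then some element of `H` of
`p`-power order lies outside `K`. -/
theorem Subgroup.exists_primary_mem_notMem [Finite G] {p : ℕ} [Fact p.Prime] {H K : Subgroup G}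
    [K.Normal] (hK : K.index ∣ p) (hHK : ¬ H ≤ K) : ∃ x ∈ H, (∃ k, x ^ p ^ k = 1) ∧ x ∉ K := by
  obtain ⟨y, hyH, hyK⟩ := SetLike.not_le_iff_exists.1 hHK
  have hsurj := ((QuotientGroup.mk' K).comp H.subtype).rangeRestrict_surjective
  obtain ⟨x, hxy, k, hk⟩ := exists_primary_lift (p := p) hsurj
    (y := ((QuotientGroup.mk' K).comp H.subtype).rangeRestrict ⟨y, hyH⟩) ⟨1, by
      rw [pow_one]
      refine Subtype.ext ?_
      change (y : G ⧸ K) ^ p = 1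
      obtain ⟨c, rfl⟩ := hK
      rw [pow_mul, Subgroup.index, pow_card_eq_one', one_pow]⟩
  refine ⟨x, x.2, ⟨k, congrArg Subtype.val hk⟩, fun hxK => hyK ?_⟩
  have : ((x : G) : G ⧸ K) = (y : G ⧸ K) := congrArg Subtype.val hxy
  rwa [(QuotientGroup.eq_one_iff (x : G)).2 hxK, eq_comm, QuotientGroup.eq_one_iff] at this

theorem Subgroup.exists_zpow_mul_mem_of_notMem {p : ℕ} [Fact p.Prime] {K : Subgroup G}
    [K.Normal] (hK : K.index ∣ p) {x : G} (hx : x ∉ K) (u : G) : ∃ i : ℤ, (x ^ i)⁻¹ * u ∈ K := by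
  have hcard : Nat.card (G ⧸ K) = p := by
    refine ((Nat.dvd_prime Fact.out).1 hK).resolve_left fun h1 => hx ?_
    rw [Subgroup.index_eq_one.1 h1]
    exact Subgroup.mem_top x
  obtain ⟨i, hi⟩ := mem_zpowers_of_prime_card hcard (g := (x : G ⧸ K)) (g' := (u : G ⧸ K))
    (mt (QuotientGroup.eq_one_iff x).1 hx)
  refine ⟨i, QuotientGroup.eq.1 ?_⟩
  rw [QuotientGroup.mk_zpow]
  exact hi

/-- In a finite solvable group satisfying `PrimaryPermuting` every subgroup is NSS-permutable. -/
theorem PrimaryPermuting.isNSSPermutable [Finite G] [Group.IsSolvable G] (h : PrimaryPermuting G)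
    (H : Subgroup G) : IsNSSPermutable H := by
  have hex : ∀ p : Nat.Primes, ∃ K T : Subgroup G, K.Normal ∧ T.Normal ∧ IsPGroup p T ∧
      K.index ∣ p ∧ ∀ x ∈ K, (∃ k, x ^ (p : ℕ) ^ k = 1) → x ∈ T := fun p =>
    have : Fact (p : ℕ).Prime := ⟨p.2⟩
    h.exists_normal_index_dvd p
  choose K T hK hT hTp hKi hKT using hex
  set L : Subgroup G := ⨅ p : {p : Nat.Primes // ¬ H ≤ K p}, K p with hL
  have hLn : L.Normal := Subgroup.normal_iInf_normal fun p => hK p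
  have hLmem : ∀ (p : Nat.Primes) (x : G), (∃ k, x ^ (p : ℕ) ^ k = 1) →
      (¬ H ≤ K p → x ∈ K p) → x ∈ L := by
    rintro p x ⟨k, hk⟩ hx
    refine Subgroup.mem_iInf.2 fun q => ?_
    rcases eq_or_ne q.1 p with e | hqp
    · rw [e]
      exact hx (e ▸ q.2)
    · have : Fact (p : ℕ).Prime := ⟨p.2⟩
      have : Fact (q.1 : ℕ).Prime := ⟨q.1.2⟩
      have := hK q.1
      exact Subgroup.mem_of_pow_pow_eq_one_of_index_dvd
        (fun e => hqp (Subtype.ext e)) (hKi q.1) hk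
  refine ⟨L, hLn, ?_, fun p hp P => ?_⟩
  · rw [← Subgroup.mul_normal]
    suffices H ⊔ L = ⊤ by rw [this, Subgroup.coe_top]
    refine Subgroup.eq_top_of_forall_exists_sylow_le fun p hp => ?_
    by_cases hHK : H ≤ K ⟨p, hp.out⟩
    · obtain ⟨P⟩ : Nonempty (Sylow p G) := inferInstance
      exact ⟨P, fun u hu => Subgroup.mem_sup_right
        (hLmem ⟨p, hp.out⟩ u (P.2.pow_pow_eq_one_of_mem hu) fun hn => absurd hHK hn)⟩
    · have := hK ⟨p, hp.out⟩
      obtain ⟨x, hxH, ⟨k, hk⟩, hxK⟩ := Subgroup.exists_primary_mem_notMem (hKi ⟨p, hp.out⟩) hHK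
      obtain ⟨P, hP⟩ := (IsPGroup.zpowers hk).exists_le_sylow
      refine ⟨P, fun u hu => ?_⟩
      obtain ⟨i, hi⟩ := Subgroup.exists_zpow_mul_mem_of_notMem (hKi ⟨p, hp.out⟩) hxK u
      have hxi : x ^ i ∈ P := hP (Subgroup.zpow_mem_zpowers x i)
      have hmem := hLmem ⟨p, hp.out⟩ _
        (P.2.pow_pow_eq_one_of_mem (mul_mem (inv_mem hxi) hu)) fun _ => hi
      rw [← mul_inv_cancel_left (x ^ i) u]
      exact Subgroup.mul_mem_sup (H.zpow_mem hxH i) hmem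
  · by_cases hHK : H ≤ K ⟨p, hp.out⟩
    · obtain ⟨P₀⟩ : Nonempty (Sylow p G) := inferInstance
      have hP₀ : (P₀ : Subgroup G) ≤ L := fun u hu =>
        hLmem ⟨p, hp.out⟩ u (P₀.2.pow_pow_eq_one_of_mem hu) fun hn => absurd hHK hn
      have hidx : ¬ p ∣ (P.toSubgroup.map L.subtype).index := by
        rw [Subgroup.index_map_subtype, hp.out.dvd_mul, not_or]
        exact ⟨P.not_dvd_index,
          fun hd => P₀.not_dvd_index (hd.trans (Subgroup.index_dvd_of_le hP₀))⟩
      let Q : Sylow p G := (P.2.map L.subtype).toSylow hidx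
      refine Subgroup.mul_comm_of_forall_primary (B := Q.toSubgroup) fun q k hq x hxH hx b hb => ?_
      rcases eq_or_ne p q with rfl | hpq
      · have := hT ⟨p, hp.out⟩
        have hxQ : x ∈ Q :=
          (hTp ⟨p, hp.out⟩).le_sylow_of_normal Q (hKT ⟨p, hp.out⟩ x (hHK hxH) ⟨k, hx⟩)
        exact ⟨x * b, mul_mem hxQ hb, 1, H.one_mem, mul_one _⟩
      · have : Fact q.Prime := ⟨hq⟩
        have hcomm := (h q x ⟨k, hx⟩).1 p hpq Q
        refine Set.mul_subset_mul_left (SetLike.coe_subset_coe.2 (Subgroup.zpowers_le.2 hxH))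
          (?_ : x * b ∈ (Q : Set G) * (Subgroup.zpowers x : Set G))
        rw [← hcomm]
        exact Set.mul_mem_mul (Subgroup.mem_zpowers x) hb
    · have hLK : L ≤ K ⟨p, hp.out⟩ := iInf_le (fun p : {p : Nat.Primes // ¬ H ≤ K p} => K p)
        ⟨⟨p, hp.out⟩, hHK⟩
      have := hT ⟨p, hp.out⟩
      have hPT : P.toSubgroup.map L.subtype = T ⟨p, hp.out⟩ ⊓ L := by
        apply le_antisymm
        · rintro _ ⟨u, hu, rfl⟩
          obtain ⟨k, hk⟩ := P.2.pow_pow_eq_one_of_mem hu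
          exact ⟨hKT ⟨p, hp.out⟩ u (hLK u.2) ⟨k, congrArg Subtype.val hk⟩, u.2⟩
        · rintro u ⟨huT, huL⟩
          have hTL : IsPGroup p ((T ⟨p, hp.out⟩).subgroupOf L) :=
            (hTp ⟨p, hp.out⟩).comap_subtype
          exact ⟨⟨u, huL⟩, hTL.le_sylow_of_normal P huT, rfl⟩
      rw [hPT]
      exact Subgroup.set_mul_normal_comm _ _

end Supplements

/-- Theorem D. -/
theorem theoremD {G : Type*} [Group G] [Finite G] (hsol : IsSolvable G) :
    List.TFAE
      [IsSSTGroup G,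
       IsNSSTGroup G,
       ∀ H : Subgroup G, IsSSPermutable H,
       ∀ H : Subgroup G, IsNSSPermutable H,
       ∀ H : Subgroup G, (∃ p k : ℕ, p.Prime ∧ Nat.card H = p ^ k) → IsSSPermutable H,
       ∀ H : Subgroup G, (∃ p k : ℕ, p.Prime ∧ Nat.card H = p ^ k) → IsNSSPermutable H,
       ∀ H : Subgroup G, IsCyclic H → (∃ p k : ℕ, p.Prime ∧ Nat.card H = p ^ k) →
         IsSSPermutable H,
       ∀ H : Subgroup G, IsCyclic H → (∃ p k : ℕ, p.Prime ∧ Nat.card H = p ^ k) →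
         IsNSSPermutable H] := by
  have : Group.IsSolvable G := hsol
  tfae_have 1 → 3 := fun h => h.isSSPermutable
  tfae_have 2 → 4 := fun h => h.isNSSPermutable
  tfae_have 3 → 1 := fun h H _ _ _ _ => h H
  tfae_have 4 → 2 := fun h H _ _ _ _ => h H
  tfae_have 3 → 5 := fun h H _ => h H
  tfae_have 5 → 7 := fun h H _ => h H
  tfae_have 4 → 3 := fun h H => (h H).isSSPermutable
  tfae_have 4 → 6 := fun h H _ => h H
  tfae_have 6 → 8 := fun h H _ => h H
  tfae_have 8 → 7 := fun h H hc hp => (h H hc hp).isSSPermutable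
  tfae_have 7 → 4 := fun h => (primaryPermuting_of_isSSPermutable h).isNSSPermutable
  tfae_finish
end
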